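/- arXiv:2405.02729 — 2 statements merged into one kernel-verified Lean document; each statement's English description precedes it below -/
import Mathlib

section
/- In the setting of Ulam's method for the approximating maps τ_n, for n ≥ N with a_n + D₁ < 1 and k ≥ 1 let f_{n,k} be a normalized fixed point of the Ulam operator P^{(k)}_{τ_n}. Then the family {f_{n,k}} is uniformly bounded in L^∞(I,λ). Moreover, if (n_j, k_j)_{j≥1} with n_j → ∞ and k_j → ∞ is such that f_{n_j,k_j} converges weakly in L¹ to some f (meaning ∫₀¹ g·f_{n_j,k_j} dλ → ∫₀¹ g·f dλ for every g ∈ L^∞(I,λ)), then f_{n_j,k_j} → f in L¹-norm and λ-almost everywhere, and f is a fixed point of the Frobenius–Perron operator P_τ of τ, i.e., the measure f·λ is τ-invariant. -/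
open MeasureTheory Set Filter

/-- Lebesgue measure on the unit interval `I = [0,1]`. -/
noncomputable def lam : MeasureTheory.Measure ℝ := MeasureTheory.volume.restrict (Set.Icc 0 1)

/-- A piecewise convex map `τ` on `[0,1]` with countably many branches, whose partition
points form a strictly decreasing sequence `1 = a 0 > a 1 > ⋯` tending to `0`; on each
`[a (m+1), a m)` the map is continuous, convex and differentiable, vanishes at the left
endpoint, and has right derivative `d (m+1) = τ'(a (m+1)) > 0` there; there is `N ≥ 1`
with `D₁ = ∑_{m=N+1}^∞ 1/τ'(a m) < 1` and `C = ∑_{m=1}^∞ 1/τ'(a m) < ∞`. -/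
structure PCApprox (τ : ℝ → ℝ) (a d : ℕ → ℝ) (N : ℕ) : Prop where
  mapsTo : Set.MapsTo τ (Set.Icc 0 1) (Set.Icc 0 1)
  a_zero : a 0 = 1
  a_anti : StrictAnti a
  a_lim : Filter.Tendsto a Filter.atTop (nhds 0)
  cont : ∀ m : ℕ, ContinuousOn τ (Set.Ico (a (m+1)) (a m))
  conv : ∀ m : ℕ, ConvexOn ℝ (Set.Ico (a (m+1)) (a m)) τ
  diff : ∀ m : ℕ, ∀ x ∈ Set.Ico (a (m+1)) (a m),
    DifferentiableWithinAt ℝ τ (Set.Ico (a (m+1)) (a m)) x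
  map_a : ∀ m : ℕ, τ (a (m+1)) = 0
  deriv_a : ∀ m : ℕ, HasDerivWithinAt τ (d (m+1)) (Set.Ici (a (m+1))) (a (m+1))
  d_pos : ∀ m : ℕ, 0 < d (m+1)
  N_pos : 1 ≤ N
  sum_d : Summable fun m => 1 / d (m+1)
  D₁_lt : (∑' m : ℕ, 1 / d (m + N + 1)) < 1

/-- `D₁ = ∑_{m=N+1}^∞ 1/τ'(a m)`. -/
noncomputable def D₁ (d : ℕ → ℝ) (N : ℕ) : ℝ := ∑' m : ℕ, 1 / d (m + N + 1)

/-- `C = ∑_{m=1}^∞ 1/τ'(a m)`. -/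
noncomputable def Cconst (d : ℕ → ℝ) : ℝ := ∑' m : ℕ, 1 / d (m + 1)

/-- `D = ∑_{m=1}^N 1/(a m · τ'(a m))`. -/
noncomputable def Dconst (a d : ℕ → ℝ) (N : ℕ) : ℝ :=
  ∑ m ∈ Finset.range N, 1 / (a (m+1) * d (m+1))

/-- The approximating map `τ_n`: `τ_n x = x / a n` for `x < a n`, and `τ_n x = τ x`
for `a n ≤ x`. -/
noncomputable def tauN (τ : ℝ → ℝ) (a : ℕ → ℝ) (n : ℕ) : ℝ → ℝ :=
  fun x => if x < a n then x / a n else τ x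

/-- Essential supremum (with respect to `λ` on `[0,1]`) of a real function, valued in `ℝ≥0∞`. -/
noncomputable def esssup (f : ℝ → ℝ) : ENNReal := essSup (fun x => ENNReal.ofReal (f x)) lam

/-- The `i`-th Ulam interval `J_{i+1} = [i/k, (i+1)/k)` of the uniform partition of `[0,1]`
into `k` subintervals. -/
noncomputable def Jint (k i : ℕ) : Set ℝ := Set.Ico ((i : ℝ) / k) (((i : ℝ) + 1) / k)

/-- The Ulam projection `Q^{(k)} f = ∑_{i=1}^k (k ∫_{J_i} f dλ) · χ_{J_i}` onto functions
constant on the elements of the uniform partition into `k` subintervals. -/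
noncomputable def Qk (k : ℕ) (f : ℝ → ℝ) : ℝ → ℝ := fun x =>
  ∑ i ∈ Finset.range k,
    Set.indicator (Jint k i) (fun _ => (k : ℝ) * ∫ y in Jint k i, f y ∂lam) x

/-- `fnk` is a normalized fixed point of the Ulam operator `P^{(k)}_σ = Q^{(k)} ∘ P_σ`:
it is constant on each `J_i`, non-negative, of integral `1`, and `Q^{(k)} (P_σ fnk) = fnk`
`λ`-a.e. (where the Frobenius–Perron image `P_σ fnk` is realized by a version `g`). -/
def IsUlamFixed (σ : ℝ → ℝ) (k : ℕ) (fnk : ℝ → ℝ) : Prop :=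
  MeasureTheory.Integrable fnk lam ∧
  (∀ i : ℕ, i < k → ∀ x ∈ Jint k i, ∀ y ∈ Jint k i, fnk x = fnk y) ∧
  (∀ x ∈ Set.Icc (0:ℝ) 1, 0 ≤ fnk x) ∧
  (∫ x, fnk x ∂lam) = 1 ∧
  ∃ g : ℝ → ℝ, MeasureTheory.Integrable g lam ∧
    (∀ A : Set ℝ, MeasurableSet A → A ⊆ Set.Icc (0:ℝ) 1 →
      ∫ x in A, g x ∂lam = ∫ x in σ ⁻¹' A, fnk x ∂lam) ∧
    Qk k g =ᵐ[lam] fnk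


lemma u16_disc (k : ℕ) (c : ℕ → ℝ) (S : ℕ → ℕ → ℝ)
    (hc0 : ∀ i, 0 ≤ c i) (hck : c k = 0)
    (hSk : ∀ j, S j k = 0)
    (hS0 : ∀ j i, 0 ≤ S j i)
    (hanti : ∀ j < k, ∀ i < k, S j (i+1) ≤ S j i)
    (hsum : ∀ j < k, ∑ i ∈ Finset.range k, S j i ≤ (j:ℝ) + 1)
    (hpos : ∀ j, j + 1 < k → 0 < S j (j+1))
    (hfix : ∀ i < k, c i = ∑ j ∈ Finset.range k, (c j - c (j+1)) * S j i) :
    ∀ j < k, c (j+1) ≤ c j := by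
  set b : ℕ → ℝ := fun j => c j - c (j+1) with hb
  set R : ℕ → ℕ → ℝ := fun j i => S j i - S j (i+1) with hR
  have hR0 : ∀ j < k, ∀ i < k, 0 ≤ R j i := fun j hj i hi => sub_nonneg.2 (hanti j hj i hi)
  have hfix' : ∀ i ≤ k, c i = ∑ j ∈ Finset.range k, b j * S j i := by
    intro i hi
    rcases hi.lt_or_eq with h | h
    · exact hfix i h
    · subst h; simp [hck, hSk]
  have hbfix : ∀ i < k, b i = ∑ j ∈ Finset.range k, b j * R j i := by
    intro i hi
    have h1 := hfix' i hi.le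
    have h2 := hfix' (i+1) hi
    simp only [hR, mul_sub, Finset.sum_sub_distrib]
    rw [← h1, ← h2]
  have habel : ∀ j < k, ∑ i ∈ Finset.range k, ((i:ℝ)+1) * R j i ≤ (j:ℝ)+1 := by
    intro j hj
    refine le_trans (le_of_eq ?_) (hsum j hj)
    have key : ∑ i ∈ Finset.range k, (((i:ℝ)+1) * R j i - S j i) = 0 := by
      have : ∀ i ∈ Finset.range k, (((i:ℝ)+1) * R j i - S j i)
          = (fun i : ℕ => -(i:ℝ) * S j i) (i+1) - (fun i : ℕ => -(i:ℝ) * S j i) i := by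
        intro i _
        simp only [hR]; push_cast; ring
      rw [Finset.sum_congr rfl this, Finset.sum_range_sub (fun i : ℕ => -(i:ℝ) * S j i)]
      simp [hSk]
    rw [Finset.sum_sub_distrib] at key
    linarith
  set e : ℕ → ℝ := fun i => ∑ j ∈ Finset.range k, |b j| * R j i - |b i| with he
  have he0 : ∀ i ∈ Finset.range k, 0 ≤ ((i:ℝ)+1) * e i := by
    intro i hi
    have hi := Finset.mem_range.1 hi
    apply mul_nonneg (by positivity)
    simp only [he, sub_nonneg]
    conv_lhs => rw [hbfix i hi]
    refine (Finset.abs_sum_le_sum_abs _ _).trans (le_of_eq (Finset.sum_congr rfl ?_))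
    intro j hj
    rw [abs_mul, abs_of_nonneg (hR0 j (Finset.mem_range.1 hj) i hi)]
  have hesum : ∑ i ∈ Finset.range k, ((i:ℝ)+1) * e i ≤ 0 := by
    have : ∑ i ∈ Finset.range k, ((i:ℝ)+1) * e i
        = ∑ j ∈ Finset.range k, |b j| * (∑ i ∈ Finset.range k, ((i:ℝ)+1) * R j i)
          - ∑ i ∈ Finset.range k, ((i:ℝ)+1) * |b i| := by
      simp only [he, mul_sub, Finset.sum_sub_distrib, Finset.mul_sum]
      rw [Finset.sum_comm]
      congr 1
      refine Finset.sum_congr rfl fun j _ => Finset.sum_congr rfl fun i _ => by ring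
    rw [this, sub_nonpos]
    refine Finset.sum_le_sum fun j hj => ?_
    rw [mul_comm]
    exact mul_le_mul_of_nonneg_right (habel j (Finset.mem_range.1 hj)) (abs_nonneg _)
  have hez : ∀ i < k, e i = 0 := by
    have h0 := (Finset.sum_eq_zero_iff_of_nonneg he0).1 (le_antisymm hesum (Finset.sum_nonneg he0))
    intro i hi
    have := h0 i (Finset.mem_range.2 hi)
    rcases mul_eq_zero.1 this with h | h
    · have : (0:ℝ) < (i:ℝ)+1 := by positivity
      linarith
    · exact h
  set n : ℕ → ℝ := fun i => |b i| - b i with hn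
  have hn0 : ∀ i, 0 ≤ n i := fun i => sub_nonneg.2 (le_abs_self _)
  have hnfix : ∀ i < k, n i = ∑ j ∈ Finset.range k, n j * R j i := by
    intro i hi
    have h1 := hez i hi
    have h2 := hbfix i hi
    simp only [he] at h1
    simp only [hn, sub_mul, Finset.sum_sub_distrib]
    linarith
  have htail : ∀ m ≤ k, ∑ i ∈ Finset.Ico m k, n i = ∑ j ∈ Finset.range k, n j * S j m := by
    intro m hm
    have : ∀ i ∈ Finset.Ico m k, n i = ∑ j ∈ Finset.range k, n j * R j i :=
      fun i hi => hnfix i (Finset.mem_Ico.1 hi).2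
    rw [Finset.sum_congr rfl this, Finset.sum_comm]
    refine Finset.sum_congr rfl fun j _ => ?_
    rw [← Finset.mul_sum]
    congr 1
    have h3 : ∀ i ∈ Finset.Ico m k, R j i = -((S j) (i+1) - (S j) i) := by
      intro i _; simp only [hR]; ring
    rw [Finset.sum_congr rfl h3, Finset.sum_neg_distrib, Finset.sum_Ico_sub _ hm, hSk]
    ring
  have hz : ∀ t, ∀ j, j + t + 1 = k → n j = 0 := by
    intro t
    induction t using Nat.strong_induction_on with
    | _ t ih =>
      intro j hj
      rcases Nat.eq_zero_or_pos t with h0 | h0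
      · subst h0
        have : j + 1 = k := by omega
        simp only [hn, hb, this, hck, sub_zero]
        rw [abs_of_nonneg (hc0 j), sub_self]
      · have h1 := htail (j+1) (by omega)
        have h2 : ∑ i ∈ Finset.Ico (j+1) k, n i = 0 := by
          refine Finset.sum_eq_zero fun i hi => ?_
          have := Finset.mem_Ico.1 hi
          exact ih (k - 1 - i) (by omega) i (by omega)
        rw [h2] at h1
        have h3 := (Finset.sum_eq_zero_iff_of_nonneg
          (fun i _ => mul_nonneg (hn0 i) (hS0 i (j+1)))).1 h1.symm j (Finset.mem_range.2 (by omega))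
        rcases mul_eq_zero.1 h3 with h | h
        · exact h
        · exact absurd h (hpos j (by omega)).ne'
  intro j hj
  have := hz (k - 1 - j) j (by omega)
  have h2 : 0 ≤ b j := by
    have : |b j| = b j := by simpa [hn, sub_eq_zero] using this
    rw [← this]; exact abs_nonneg _
  simpa [hb] using h2

lemma u16_branch (p q : ℝ) (φ : ℝ → ℝ) (hconv : ConvexOn ℝ (Ico p q) φ) (h0 : φ p = 0)
    (s h : ℝ) (hs : 0 ≤ s) (hh : 0 < h) :
    volume.real (Ico p q ∩ φ ⁻¹' Ico (s+h) (s+2*h)) ≤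
      volume.real (Ico p q ∩ φ ⁻¹' Ico s (s+h)) := by
  rcases le_or_gt q p with hpq | hpq
  · simp [Ico_eq_empty (not_lt.2 hpq)]
  set D : ℝ → Set ℝ := fun t => {x ∈ Ico p q | φ x < t} with hD
  have hDm : ∀ t, MeasurableSet (D t) := fun t => (hconv.convex_lt t).ordConnected.measurableSet
  have hDsub : ∀ t, D t ⊆ Ico p q := fun t x hx => hx.1
  have hDf : ∀ t, volume (D t) ≠ ⊤ := fun t =>
    ((measure_mono (hDsub t)).trans_lt measure_Ico_lt_top).ne
  have hdiff : ∀ u v, u ≤ v → volume.real (Ico p q ∩ φ ⁻¹' Ico u v)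
      = volume.real (D v) - volume.real (D u) := by
    intro u v huv
    have : Ico p q ∩ φ ⁻¹' Ico u v = D v \ D u := by
      ext x; simp only [hD, mem_inter_iff, mem_preimage, mem_Ico, Set.mem_sdiff, mem_ofPred_eq, not_and, not_lt]
      constructor
      · rintro ⟨h1, h2, h3⟩; exact ⟨⟨h1, h3⟩, fun _ => h2⟩
      · rintro ⟨⟨h1, h2⟩, h3⟩; exact ⟨h1, h3 h1, h2⟩
    have hsub : D u ⊆ D v := fun x hx => ⟨hx.1, hx.2.trans_le huv⟩
    rw [this, measureReal_sdiff hsub (hDm u) (hDf v)]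
  rw [hdiff _ _ (by linarith), hdiff _ _ (by linarith)]
  have hp : p ∈ Ico p q := ⟨le_rfl, hpq⟩
  set W := volume.real (D (s+h)) with hW
  have hlow : ∀ z ∈ D (s+h), z - p ≤ W := by
    intro z hz
    have hp' : p ∈ D (s+h) := ⟨hp, by rw [h0]; linarith⟩
    have hsub : Icc p z ⊆ D (s+h) := (hconv.convex_lt (s+h)).ordConnected.out hp' hz
    have := measureReal_mono hsub (hDf _)
    rwa [Real.volume_real_Icc_of_le hz.1.1] at this
  have hup : ∀ t w, 0 ≤ w → (∀ x ∈ D t, x - p ≤ w) → volume.real (D t) ≤ w := by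
    intro t w hw hx
    have hsub : D t ⊆ Icc p (p+w) := fun x h => ⟨h.1.1, by linarith [hx x h]⟩
    have := measureReal_mono hsub (measure_Icc_lt_top (μ := volume)).ne
    rw [Real.volume_real_Icc_of_le (by linarith)] at this
    linarith
  have hmid : ∀ x ∈ Ico p q, φ x ≤ s → ∀ y ∈ D (s+2*h), (x - p) + (y - p) ≤ 2 * W := by
    intro x hx hxs y hy
    have hm : (1/2:ℝ) * x + (1/2) * y ∈ D (s+h) := by
      have hc := hconv.2 hx hy.1 (by norm_num : (0:ℝ) ≤ 1/2) (by norm_num : (0:ℝ) ≤ 1/2) (by norm_num)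
      have hm := hconv.1 hx hy.1 (by norm_num : (0:ℝ) ≤ 1/2) (by norm_num : (0:ℝ) ≤ 1/2) (by norm_num)
      simp only [smul_eq_mul] at hc hm
      refine ⟨hm, ?_⟩
      have := hy.2
      linarith
    have := hlow _ hm
    linarith
  have hpD : p ∈ D (s+2*h) := ⟨hp, by rw [h0]; linarith⟩
  have hstep : ∀ x ∈ Ico p q, φ x ≤ s → volume.real (D (s+2*h)) ≤ 2 * W - (x - p) := by
    intro x hx hxs
    refine hup _ _ ?_ fun y hy => ?_
    · have := hmid x hx hxs p hpD; linarith
    · have := hmid x hx hxs y hy; linarith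
  have : volume.real (D s) ≤ 2 * W - volume.real (D (s+2*h)) := by
    refine hup _ _ ?_ fun y hy => ?_
    · have := hstep p hp (by rw [h0]; exact hs); linarith
    · have := hstep y hy.1 hy.2.le; linarith
  linarith

structure U16Good (τ : ℝ → ℝ) (a d : ℕ → ℝ) (N : ℕ) : Prop where
  meas : Measurable τ
  mapsTo : ∀ x ∈ Icc (0:ℝ) 1, τ x ∈ Icc (0:ℝ) 1
  a_zero : a 0 = 1
  a_anti : StrictAnti a
  a_lim : Tendsto a atTop (nhds 0)
  conv : ∀ m : ℕ, ConvexOn ℝ (Ico (a (m+1)) (a m)) τ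
  map_a : ∀ m : ℕ, τ (a (m+1)) = 0
  lower : ∀ m : ℕ, ∀ x ∈ Ico (a (m+1)) (a m), d (m+1) * (x - a (m+1)) ≤ τ x
  d_pos : ∀ m : ℕ, 0 < d (m+1)
  N_pos : 1 ≤ N
  sum_d : Summable fun m => 1 / d (m+1)

structure U16Fix (σ : ℝ → ℝ) (k : ℕ) (f : ℝ → ℝ) : Prop where
  int : IntegrableOn f (Ico 0 1)
  const : ∀ i : ℕ, i < k → ∀ x ∈ Jint k i, ∀ y ∈ Jint k i, f x = f y
  nn : ∀ x ∈ Ico (0:ℝ) 1, 0 ≤ f x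
  one : ∫ x in Ico (0:ℝ) 1, f x = 1
  fix : ∀ i < k, ∫ x in Jint k i, f x = ∫ x in Ico 0 1 ∩ σ ⁻¹' Jint k i, f x

lemma u16_lam : lam = volume.restrict (Ico 0 1) := by
  unfold lam
  exact (Measure.restrict_congr_set Ico_ae_eq_Icc).symm

lemma u16_mem_J {k : ℕ} (hk : 1 ≤ k) (i : ℕ) (x : ℝ) :
    x ∈ Jint k i ↔ 0 ≤ x ∧ ⌊x * k⌋₊ = i := by
  have hk' : (0:ℝ) < k := by exact_mod_cast hk
  unfold Jint
  rw [mem_Ico, div_le_iff₀ hk', lt_div_iff₀ hk']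
  constructor
  · rintro ⟨h1, h2⟩
    have h0 : 0 ≤ x * k := le_trans (Nat.cast_nonneg i) h1
    exact ⟨nonneg_of_mul_nonneg_left h0 hk', (Nat.floor_eq_iff h0).2 ⟨h1, h2⟩⟩
  · rintro ⟨h0, h1⟩
    exact (Nat.floor_eq_iff (mul_nonneg h0 hk'.le)).1 h1

lemma u16_floor_lt {k : ℕ} (hk : 1 ≤ k) {x : ℝ} (hx : x ∈ Ico (0:ℝ) 1) : ⌊x * k⌋₊ < k := by
  have hk' : (0:ℝ) < k := by exact_mod_cast hk
  rw [Nat.floor_lt (mul_nonneg hx.1 hk'.le)]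
  nlinarith [hx.2]

lemma u16_J_sub {k i : ℕ} (hk : 1 ≤ k) (hi : i < k) : Jint k i ⊆ Ico 0 1 := by
  have hk' : (0:ℝ) < k := by exact_mod_cast hk
  have : (i:ℝ) + 1 ≤ k := by exact_mod_cast hi
  intro x hx
  refine ⟨((u16_mem_J hk i x).1 hx).1, hx.2.trans_le ?_⟩
  rw [div_le_one hk']; exact this

lemma u16_J_vol {k : ℕ} (hk : 1 ≤ k) (i : ℕ) : volume.real (Jint k i) = 1 / k := by
  have hk' : (0:ℝ) < k := by exact_mod_cast hk
  unfold Jint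
  rw [Real.volume_real_Ico_of_le (by gcongr; linarith)]
  ring

lemma u16_J_meas (k i : ℕ) : MeasurableSet (Jint k i) := measurableSet_Ico

lemma u16_Qk {k i : ℕ} (hk : 1 ≤ k) (hi : i < k) (g : ℝ → ℝ) {x : ℝ} (hx : x ∈ Jint k i) :
    Qk k g x = (k : ℝ) * ∫ y in Jint k i, g y ∂lam := by
  unfold Qk
  rw [Finset.sum_eq_single i]
  · rw [indicator_of_mem hx]
  · intro j _ hj
    apply indicator_of_notMem
    intro h
    exact hj (((u16_mem_J hk j x).1 h).2.symm.trans ((u16_mem_J hk i x).1 hx).2)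
  · intro h; exact absurd (Finset.mem_range.2 hi) h

lemma u16_fix_of {σ σ' : ℝ → ℝ} {k : ℕ} (hk : 1 ≤ k) {f : ℝ → ℝ} (hσ' : Measurable σ')
    (hσσ : σ' =ᵐ[lam] σ) (h : IsUlamFixed σ k f) : U16Fix σ' k f := by
  obtain ⟨hintg, hconst, hnn, hone, g, hg, hgA, hQ⟩ := h
  have hk' : (0:ℝ) < k := by exact_mod_cast hk
  refine ⟨?_, hconst, fun x hx => hnn x ⟨hx.1, hx.2.le⟩, ?_, ?_⟩
  · rwa [u16_lam] at hintg
  · rwa [u16_lam] at hone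
  · intro i hi
    have hJs := u16_J_sub hk hi
    have h1 : ∫ x in Jint k i, f x = ∫ x in Jint k i, Qk k g x := by
      apply setIntegral_congr_ae (u16_J_meas k i)
      rw [u16_lam, EventuallyEq, ae_restrict_iff' measurableSet_Ico] at hQ
      filter_upwards [hQ] with x hx hxJ
      exact (hx (hJs hxJ)).symm
    have h2 : ∫ x in Jint k i, Qk k g x = ∫ y in Jint k i, g y ∂lam := by
      rw [setIntegral_congr_fun (u16_J_meas k i) (fun x hx => u16_Qk hk hi g hx)]
      rw [setIntegral_const, u16_J_vol hk, smul_eq_mul]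
      field_simp
    rw [h1, h2, hgA _ (u16_J_meas k i) (hJs.trans Ico_subset_Icc_self)]
    have h3 : (σ' ⁻¹' Jint k i : Set ℝ) =ᵐ[lam] (σ ⁻¹' Jint k i : Set ℝ) := by
      filter_upwards [hσσ] with x hx
      apply propext
      show σ' x ∈ Jint k i ↔ σ x ∈ Jint k i
      rw [hx]
    rw [← setIntegral_congr_set h3, u16_lam, Measure.restrict_restrict (hσ' (u16_J_meas k i)),
      inter_comm]

lemma u16_decomp {a : ℕ → ℝ} (h0 : a 0 = 1) (ha : StrictAnti a) (hpos : ∀ n, 0 < a n)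
    {E : Set ℝ} (hE : MeasurableSet E) {f : ℝ → ℝ} (hf : IntegrableOn f (Ico 0 1)) (n : ℕ) :
    ∫ x in Ico 0 1 ∩ E, f x = (∫ x in Ico 0 (a n) ∩ E, f x) +
      ∑ m ∈ Finset.range n, ∫ x in Ico (a (m+1)) (a m) ∩ E, f x := by
  induction n with
  | zero => simp [h0]
  | succ n ih =>
    rw [ih, Finset.sum_range_succ]
    have hle : a (n+1) ≤ a n := (ha (Nat.lt_succ_self n)).le
    have han : a n ≤ 1 := h0 ▸ ha.antitone (Nat.zero_le n)
    have : Ico 0 (a n) ∩ E = (Ico 0 (a (n+1)) ∩ E) ∪ (Ico (a (n+1)) (a n) ∩ E) := by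
      rw [← union_inter_distrib_right, Ico_union_Ico_eq_Ico (hpos _).le hle]
    rw [this, setIntegral_union]
    · ring
    · exact (Ico_disjoint_Ico_same).mono inter_subset_left inter_subset_left
    · exact measurableSet_Ico.inter hE
    · exact hf.mono_set (inter_subset_left.trans (Ico_subset_Ico le_rfl (hle.trans han)))
    · exact hf.mono_set (inter_subset_left.trans (Ico_subset_Ico (hpos _).le han))

lemma u16_decomp_vol {a : ℕ → ℝ} (h0 : a 0 = 1) (ha : StrictAnti a) (hpos : ∀ n, 0 < a n)
    {E : Set ℝ} (hE : MeasurableSet E) (n : ℕ) :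
    volume.real (Ico 0 1 ∩ E) = volume.real (Ico 0 (a n) ∩ E) +
      ∑ m ∈ Finset.range n, volume.real (Ico (a (m+1)) (a m) ∩ E) := by
  have := u16_decomp h0 ha hpos hE (f := fun _ => (1:ℝ)) (integrableOn_const (by simp)) n
  simpa using this

lemma U16Good.pos {τ a d N} (h : U16Good τ a d N) (n : ℕ) : 0 < a n :=
  (h.a_anti.antitone.le_of_tendsto h.a_lim (n+1)).trans_lt (h.a_anti (Nat.lt_succ_self n))

lemma U16Good.le_one {τ a d N} (h : U16Good τ a d N) (n : ℕ) : a n ≤ 1 :=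
  h.a_zero ▸ h.a_anti.antitone (Nat.zero_le n)

lemma u16_tauN_meas {τ a} (h : Measurable τ) (n : ℕ) : Measurable (tauN τ a n) :=
  Measurable.ite measurableSet_Iio (by fun_prop) h

lemma u16_vol_anti {τ a d N} (hg : U16Good τ a d N) (n : ℕ) (r s h : ℝ)
    (hs : 0 ≤ s) (hh : 0 < h) :
    volume.real (Ico 0 1 ∩ (Iio r ∩ tauN τ a n ⁻¹' Ico (s+h) (s+2*h))) ≤
      volume.real (Ico 0 1 ∩ (Iio r ∩ tauN τ a n ⁻¹' Ico s (s+h))) := by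
  have hm := u16_tauN_meas (a := a) hg.meas n
  rw [u16_decomp_vol hg.a_zero hg.a_anti hg.pos (measurableSet_Iio.inter (hm measurableSet_Ico)) n,
    u16_decomp_vol hg.a_zero hg.a_anti hg.pos (measurableSet_Iio.inter (hm measurableSet_Ico)) n]
  have key : ∀ p q (φ : ℝ → ℝ), ConvexOn ℝ (Ico p q) φ → φ p = 0 →
      (∀ x ∈ Ico p q, tauN τ a n x = φ x) →
      volume.real (Ico p q ∩ (Iio r ∩ tauN τ a n ⁻¹' Ico (s+h) (s+2*h))) ≤
      volume.real (Ico p q ∩ (Iio r ∩ tauN τ a n ⁻¹' Ico s (s+h))) := by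
    intro p q φ hφ hp heq
    have hrew : ∀ K : Set ℝ, Ico p q ∩ (Iio r ∩ tauN τ a n ⁻¹' K) = Ico p (min q r) ∩ φ ⁻¹' K := by
      intro K
      ext x
      simp only [mem_inter_iff, mem_Ico, mem_Iio, mem_preimage, lt_min_iff]
      constructor
      · rintro ⟨h1, h2, h3⟩
        rw [heq x h1] at h3
        exact ⟨⟨h1.1, h1.2, h2⟩, h3⟩
      · rintro ⟨⟨h1, h2, h3⟩, h4⟩
        rw [heq x ⟨h1, h2⟩]
        exact ⟨⟨h1, h2⟩, h3, h4⟩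
    rw [hrew, hrew]
    exact u16_branch p _ φ (hφ.subset (Ico_subset_Ico le_rfl (min_le_left _ _)) (convex_Ico _ _))
      hp s h hs hh
  refine add_le_add ?_ (Finset.sum_le_sum fun m hmn => ?_)
  · refine key 0 (a n) (fun x => x / a n) ?_ (by simp) ?_
    · refine ⟨convex_Ico _ _, fun x _ y _ u v _ _ _ => le_of_eq ?_⟩
      simp only [smul_eq_mul]; ring
    · intro x hx; simp [tauN, hx.2]
  · refine key _ _ τ (hg.conv m) (hg.map_a m) ?_
    intro x hx
    have : a n ≤ a (m+1) := hg.a_anti.antitone (Finset.mem_range.1 hmn)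
    simp [tauN, not_lt.2 (this.trans hx.1)]

lemma u16_step {k : ℕ} (hk : 1 ≤ k) {f : ℝ → ℝ} (hintg : IntegrableOn f (Ico 0 1))
    (hconst : ∀ i : ℕ, i < k → ∀ x ∈ Jint k i, ∀ y ∈ Jint k i, f x = f y)
    {E : Set ℝ} (hE : MeasurableSet E) (l : ℕ) (hl : l ≤ k) :
    ∫ x in Ico 0 1 ∩ (Iio ((l:ℝ)/k) ∩ E), f x = ∑ j ∈ Finset.range l, f ((j:ℝ)/k) *
      (volume.real (Ico 0 1 ∩ (Iio (((j+1:ℕ):ℝ)/k) ∩ E)) -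
        volume.real (Ico 0 1 ∩ (Iio ((j:ℝ)/k) ∩ E))) := by
  have hk' : (0:ℝ) < k := by exact_mod_cast hk
  induction l with
  | zero =>
    have : Ico (0:ℝ) 1 ∩ (Iio (((0:ℕ):ℝ)/k) ∩ E) = ∅ := by
      ext x
      simp only [mem_inter_iff, mem_Ico, mem_Iio, mem_empty_iff_false, iff_false]
      rintro ⟨h1, h2, _⟩
      simp at h2; linarith [h1.1]
    rw [this]; simp
  | succ l ih =>
    rw [Finset.sum_range_succ, ← ih (by omega)]
    have hll : (l:ℝ)/k ≤ ((l+1:ℕ):ℝ)/k := by push_cast; gcongr; linarith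
    have hsub : Jint k l ∩ E ⊆ Ico 0 1 := inter_subset_left.trans (u16_J_sub hk (by omega))
    have hU : Ico 0 1 ∩ (Iio (((l+1:ℕ):ℝ)/k) ∩ E) =
        (Ico 0 1 ∩ (Iio ((l:ℝ)/k) ∩ E)) ∪ (Jint k l ∩ E) := by
      ext x
      constructor
      · rintro ⟨h1, h2, h3⟩
        rcases lt_or_ge x ((l:ℝ)/k) with h | h
        · exact Or.inl ⟨h1, h, h3⟩
        · refine Or.inr ⟨⟨h, ?_⟩, h3⟩
          have : x < ((l+1:ℕ):ℝ)/k := h2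
          push_cast at this; exact this
      · rintro (⟨h1, h2, h3⟩ | h)
        · exact ⟨h1, lt_of_lt_of_le h2 hll, h3⟩
        · refine ⟨hsub h, ?_, h.2⟩
          have := h.1.2
          show x < _
          push_cast; exact this
    have hdisj : Disjoint (Ico 0 1 ∩ (Iio ((l:ℝ)/k) ∩ E)) (Jint k l ∩ E) := by
      rw [Set.disjoint_left]
      rintro x ⟨_, h2, _⟩ h
      have h2 : x < (l:ℝ)/k := h2
      exact absurd h.1.1 (not_le.2 h2)
    have hm : MeasurableSet (Jint k l ∩ E) := (u16_J_meas k l).inter hE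
    have hv : volume (Jint k l ∩ E) ≠ ⊤ := ((measure_mono hsub).trans_lt measure_Ico_lt_top).ne
    have hv2 : volume (Ico 0 1 ∩ (Iio ((l:ℝ)/k) ∩ E)) ≠ ⊤ :=
      ((measure_mono inter_subset_left).trans_lt measure_Ico_lt_top).ne
    rw [hU, setIntegral_union hdisj hm (hintg.mono_set inter_subset_left) (hintg.mono_set hsub),
      measureReal_union hdisj hm hv2 hv]
    congr 1
    have hlm : (l:ℝ)/k ∈ Jint k l := ⟨le_rfl, by gcongr; linarith⟩
    rw [setIntegral_congr_fun hm (g := fun _ => f ((l:ℝ)/k))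
      (fun x hx => hconst l (by omega) x hx.1 _ hlm)]
    rw [setIntegral_const, smul_eq_mul]
    ring

lemma u16_anti {τ a d N} (hg : U16Good τ a d N) {n k : ℕ} (hn : 1 ≤ n) (hk : 1 ≤ k) {f : ℝ → ℝ}
    (hf : U16Fix (tauN τ a n) k f) : AntitoneOn f (Ico 0 1) := by
  have hk' : (0:ℝ) < k := by exact_mod_cast hk
  have hm := u16_tauN_meas (a := a) hg.meas n
  have han := hg.pos n
  have han1 : a n < 1 := hg.a_zero ▸ hg.a_anti (by omega : 0 < n)
  set c : ℕ → ℝ := fun i => if i < k then f ((i:ℝ)/k) else 0 with hc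
  set V : ℕ → ℕ → ℝ := fun l i =>
    volume.real (Ico 0 1 ∩ (Iio ((l:ℝ)/k) ∩ tauN τ a n ⁻¹' Jint k i)) with hV
  set S : ℕ → ℕ → ℝ := fun j i => if i < k then k * V (j+1) i else 0 with hS
  have hpt : ∀ i, (i:ℝ)/k ∈ Jint k i := fun i => ⟨le_rfl, by gcongr; linarith⟩
  have hV0 : ∀ i, V 0 i = 0 := by
    intro i
    have : Ico (0:ℝ) 1 ∩ (Iio (((0:ℕ):ℝ)/k) ∩ tauN τ a n ⁻¹' Jint k i) = ∅ := by
      ext x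
      simp only [mem_inter_iff, mem_Ico, mem_Iio, mem_empty_iff_false, iff_false]
      rintro ⟨h1, h2, _⟩
      simp at h2; linarith [h1.1]
    simp only [hV]; rw [this]; simp
  have hfin : ∀ E : Set ℝ, volume (Ico (0:ℝ) 1 ∩ E) ≠ ⊤ := fun E =>
    ((measure_mono inter_subset_left).trans_lt measure_Ico_lt_top).ne
  have hdec : ∀ j < k, c (j+1) ≤ c j := by
    refine u16_disc k c S ?_ ?_ ?_ ?_ ?_ ?_ ?_ ?_
    · intro i
      simp only [hc]; split_ifs with h
      · exact hf.nn _ (u16_J_sub hk h (hpt i))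
      · exact le_rfl
    · simp [hc]
    · intro j; simp [hS]
    · intro j i; simp only [hS]; split_ifs
      · exact mul_nonneg hk'.le measureReal_nonneg
      · exact le_rfl
    · intro j _ i hi
      simp only [hS, hi, if_true]
      split_ifs with h
      · refine mul_le_mul_of_nonneg_left ?_ hk'.le
        have := u16_vol_anti hg n (((j+1:ℕ):ℝ)/k) ((i:ℝ)/k) (1/k) (by positivity) (by positivity)
        have e1 : Jint k i = Ico ((i:ℝ)/k) ((i:ℝ)/k+1/k) := by
          unfold Jint; congr 1; ring
        have e2 : Jint k (i+1) = Ico ((i:ℝ)/k+1/k) ((i:ℝ)/k+2*(1/k)) := by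
          unfold Jint; push_cast; congr 1 <;> ring
        simp only [hV]; rw [e1, e2]; exact this
      · exact mul_nonneg hk'.le measureReal_nonneg
    · intro j hj
      have e1 : ∑ i ∈ Finset.range k, S j i = k * ∑ i ∈ Finset.range k, V (j+1) i := by
        rw [Finset.mul_sum]
        refine Finset.sum_congr rfl fun i hi => ?_
        simp [hS, Finset.mem_range.1 hi]
      have e2 : ∑ i ∈ Finset.range k, V (j+1) i ≤ ((j:ℝ)+1)/k := by
        simp only [hV]
        rw [← measureReal_biUnion_finset (h := fun i _ => hfin _)]
        · have hs : (⋃ i ∈ Finset.range k, Ico 0 1 ∩ (Iio (((j+1:ℕ):ℝ)/k) ∩ tauN τ a n ⁻¹' Jint k i))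
              ⊆ Ico 0 (((j:ℝ)+1)/k) := by
            refine iUnion₂_subset fun i _ x hx => ⟨hx.1.1, ?_⟩
            have : x < ((j+1:ℕ):ℝ)/k := hx.2.1
            push_cast at this; exact this
          refine (measureReal_mono hs measure_Ico_lt_top.ne).trans ?_
          rw [Real.volume_real_Ico_of_le (by positivity)]; simp
        · intro i _ i' _ hii
          rw [Function.onFun, Set.disjoint_left]
          rintro x ⟨_, _, h1⟩ ⟨_, _, h2⟩
          exact hii (((u16_mem_J hk i _).1 h1).2.symm.trans ((u16_mem_J hk i' _).1 h2).2)
        · intro i _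
          exact measurableSet_Ico.inter (measurableSet_Iio.inter (hm (u16_J_meas k i)))
      rw [e1]
      calc (k:ℝ) * _ ≤ k * (((j:ℝ)+1)/k) := mul_le_mul_of_nonneg_left e2 hk'.le
        _ = _ := by field_simp
    · intro j hj
      simp only [hS, hj, if_true]
      refine mul_pos hk' ?_
      set L : ℝ := ((j+1:ℕ):ℝ) with hL
      have hL0 : 0 < L := by simp only [hL]; positivity
      have hLk : L + 1 ≤ k := by simp only [hL]; exact_mod_cast hj
      have hs : Ico (a n * (L/k)) (min (L/k) (a n * ((L+1)/k))) ⊆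
          Ico 0 1 ∩ (Iio (L/k) ∩ tauN τ a n ⁻¹' Jint k (j+1)) := by
        rintro x ⟨h1, h2⟩
        rw [lt_min_iff] at h2
        have hx0 : 0 ≤ x := le_trans (by positivity) h1
        have hle : (L+1)/k ≤ 1 := by rw [div_le_one hk']; exact hLk
        have hxa : x < a n := by nlinarith
        refine ⟨⟨hx0, hxa.trans han1⟩, h2.1, ?_⟩
        show tauN τ a n x ∈ Jint k (j+1)
        simp only [tauN, hxa, if_true]
        refine ⟨?_, ?_⟩
        · rw [le_div_iff₀ han, mul_comm]; exact h1
        · rw [div_lt_iff₀ han, mul_comm]; exact h2.2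
      have hlt : a n * (L/k) < min (L/k) (a n * ((L+1)/k)) := by
        rw [lt_min_iff]
        have : 0 < L/k := by positivity
        refine ⟨by nlinarith, ?_⟩
        apply mul_lt_mul_of_pos_left _ han
        gcongr; linarith
      have := measureReal_mono hs (hfin _)
      rw [Real.volume_real_Ico_of_le hlt.le] at this
      refine lt_of_lt_of_le (sub_pos.2 hlt) this
    · intro i hi
      have h1 := hf.fix i hi
      have h2 : ∫ x in Jint k i, f x = (1/k) * c i := by
        rw [setIntegral_congr_fun (u16_J_meas k i) (g := fun _ => f ((i:ℝ)/k))
          (fun x hx => hf.const i hi x hx _ (hpt i)), setIntegral_const, u16_J_vol hk]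
        simp [hc, hi]
      have h3 := u16_step hk hf.int hf.const (hm (u16_J_meas k i)) k le_rfl
      have h4 : Ico (0:ℝ) 1 ∩ (Iio ((k:ℝ)/k) ∩ tauN τ a n ⁻¹' Jint k i)
          = Ico 0 1 ∩ tauN τ a n ⁻¹' Jint k i := by
        rw [div_self hk'.ne', ← inter_assoc]
        congr 1
        exact inter_eq_left.2 fun x hx => hx.2
      rw [h4, ← h1, h2] at h3
      have h5 : ∑ j ∈ Finset.range k, f ((j:ℝ)/k) *
            (volume.real (Ico 0 1 ∩ (Iio (((j+1:ℕ):ℝ)/k) ∩ tauN τ a n ⁻¹' Jint k i)) -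
            volume.real (Ico 0 1 ∩ (Iio ((j:ℝ)/k) ∩ tauN τ a n ⁻¹' Jint k i)))
          = ∑ j ∈ Finset.range k, (c j - c (j+1)) * V (j+1) i := by
        have h6 : ∑ j ∈ Finset.range k, (c j * (V (j+1) i - V j i) - (c j - c (j+1)) * V (j+1) i)
            = 0 := by
          rw [Finset.sum_congr rfl (g := fun j => (fun j => c j * V j i) (j+1)
            - (fun j => c j * V j i) j) (fun j _ => by ring),
            Finset.sum_range_sub (fun j => c j * V j i), hV0]
          simp [hc]
        rw [Finset.sum_sub_distrib, sub_eq_zero] at h6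
        rw [← h6]
        refine Finset.sum_congr rfl fun j hj => ?_
        simp only [hc, hV, Finset.mem_range.1 hj, if_true]
      rw [h5] at h3
      have h7 : ∑ j ∈ Finset.range k, (c j - c (j+1)) * S j i
          = k * ∑ j ∈ Finset.range k, (c j - c (j+1)) * V (j+1) i := by
        rw [Finset.mul_sum]
        refine Finset.sum_congr rfl fun j _ => ?_
        simp only [hS, hi, if_true]; ring
      rw [h7, ← h3]; field_simp
  have hmono : ∀ i j, i ≤ j → j < k → c j ≤ c i := by
    intro i j hij
    induction j, hij using Nat.le_induction with
    | base => intro _; exact le_rfl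
    | succ j _ ih => intro hj; exact (hdec j (by omega)).trans (ih (by omega))
  have hval : ∀ x ∈ Ico (0:ℝ) 1, f x = c ⌊x * k⌋₊ := by
    intro x hx
    have hl := u16_floor_lt hk hx
    simp only [hc, hl, if_true]
    exact hf.const _ hl x ((u16_mem_J hk _ x).2 ⟨hx.1, rfl⟩) _ (hpt _)
  intro x hx y hy hxy
  rw [hval x hx, hval y hy]
  exact hmono _ _ (Nat.floor_le_floor (by gcongr)) (u16_floor_lt hk hy)

lemma u16_ibd {f : ℝ → ℝ} (hintg : IntegrableOn f (Ico 0 1)) {X : Set ℝ} (hX : MeasurableSet X)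
    (hX1 : X ⊆ Ico 0 1) {p w B : ℝ} (hw : 0 ≤ w) (hB : 0 ≤ B) (hXp : X ⊆ Ico p (p+w))
    (hfB : ∀ x ∈ X, f x ≤ B) : ∫ x in X, f x ≤ B * w := by
  have hv : volume X ≠ ⊤ := ((measure_mono hX1).trans_lt measure_Ico_lt_top).ne
  have h1 : ∫ x in X, f x ≤ ∫ x in X, B :=
    setIntegral_mono_on (hintg.mono_set hX1) (integrableOn_const hv) hX hfB
  rw [setIntegral_const, smul_eq_mul] at h1
  have h2 := measureReal_mono hXp (measure_Ico_lt_top (μ := volume)).ne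
  rw [Real.volume_real_Ico_of_le (by linarith)] at h2
  nlinarith

lemma u16_bound {τ a d N} (hg : U16Good τ a d N) {n k : ℕ} (hn : N ≤ n)
    (hD : a n + D₁ d N < 1) (hk : 1 ≤ k) {f : ℝ → ℝ}
    (hf : U16Fix (tauN τ a n) k f) :
    ∀ x ∈ Ico (0:ℝ) 1, f x ≤ Dconst a d N / (1 - a n - D₁ d N) := by
  have hk' : (0:ℝ) < k := by exact_mod_cast hk
  have hm := u16_tauN_meas (a := a) hg.meas n
  have han := hg.pos n
  have hanti := u16_anti hg (hg.N_pos.trans hn) hk hf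
  have h01 : (0:ℝ) ∈ Ico (0:ℝ) 1 := ⟨le_rfl, one_pos⟩
  have hf0 : ∀ x ∈ Ico (0:ℝ) 1, f x ≤ f 0 := fun x hx => hanti h01 hx hx.1
  have hf0n := hf.nn 0 h01
  have hinv : ∀ x ∈ Ico (0:ℝ) 1, 0 < x → f x ≤ 1 / x := by
    intro x hx hx0
    have hsub : Ico 0 x ⊆ Ico 0 1 := Ico_subset_Ico le_rfl hx.2.le
    have h1 : ∫ y in Ico 0 x, f x ≤ ∫ y in Ico 0 x, f y :=
      setIntegral_mono_on (integrableOn_const measure_Ico_lt_top.ne) (hf.int.mono_set hsub)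
        measurableSet_Ico (fun y hy => hanti (hsub hy) hx hy.2.le)
    have h2 : ∫ y in Ico 0 x, f y ≤ ∫ y in Ico 0 1, f y :=
      setIntegral_mono_set hf.int ((ae_restrict_iff' measurableSet_Ico).2
        (Eventually.of_forall hf.nn)) hsub.eventuallyLE
    rw [setIntegral_const, Real.volume_real_Ico_of_le hx0.le, smul_eq_mul] at h1
    rw [hf.one] at h2
    rw [le_div_iff₀ hx0]; linarith
  have hJ0 : Jint k 0 = Ico 0 (1/(k:ℝ)) := by simp [Jint]
  have hE := hm (u16_J_meas k 0)
  have h1 := hf.fix 0 hk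
  have h2 : ∫ x in Jint k 0, f x = (1/k) * f 0 := by
    rw [setIntegral_congr_fun (u16_J_meas k 0) (g := fun _ => f 0)
      (fun x hx => hf.const 0 hk x hx _ (by rw [hJ0]; exact ⟨le_rfl, by positivity⟩)),
      setIntegral_const, u16_J_vol hk, smul_eq_mul]
  rw [h2, u16_decomp hg.a_zero hg.a_anti hg.pos hE hf.int n] at h1
  have hb0 : ∫ x in Ico 0 (a n) ∩ tauN τ a n ⁻¹' Jint k 0, f x ≤ f 0 * (a n / k) := by
    refine u16_ibd hf.int (p := 0) (measurableSet_Ico.inter hE)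
      (inter_subset_left.trans (Ico_subset_Ico le_rfl (hg.le_one n))) (by positivity) hf0n ?_ ?_
    · rintro x ⟨hx1, hx2⟩
      have hx2 : tauN τ a n x ∈ Jint k 0 := hx2
      rw [hJ0] at hx2
      have := hx2.2
      simp only [tauN, hx1.2, if_true] at this
      rw [div_lt_iff₀ han] at this
      refine ⟨hx1.1, ?_⟩
      calc x < _ := this
        _ = _ := by ring
    · intro x hx; exact hf0 x ⟨hx.1.1, hx.1.2.trans_le (hg.le_one n)⟩
  have hbm : ∀ m < n, ∀ B, 0 ≤ B → (∀ x ∈ Ico (a (m+1)) (a m), f x ≤ B) →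
      ∫ x in Ico (a (m+1)) (a m) ∩ tauN τ a n ⁻¹' Jint k 0, f x ≤ B * (1 / (k * d (m+1))) := by
    intro m hmn B hB hfB
    have hd := hg.d_pos m
    refine u16_ibd hf.int (p := a (m+1)) (measurableSet_Ico.inter hE)
      (inter_subset_left.trans (Ico_subset_Ico (hg.pos _).le (hg.le_one m))) (by positivity) hB ?_ ?_
    · rintro x ⟨hx1, hx2⟩
      have hx2 : tauN τ a n x ∈ Jint k 0 := hx2
      rw [hJ0] at hx2
      have h3 := hx2.2
      have h4 : a n ≤ a (m+1) := hg.a_anti.antitone hmn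
      simp only [tauN, not_lt.2 (h4.trans hx1.1), if_false] at h3
      have h5 := (hg.lower m x hx1).trans_lt h3
      refine ⟨hx1.1, ?_⟩
      rw [mul_comm, ← lt_div_iff₀ hd] at h5
      rw [← sub_lt_iff_lt_add']
      calc _ < _ := h5
        _ = _ := by rw [div_div]
    · intro x hx; exact hfB x hx.1
  have hsumm : Summable fun m => 1 / d (m + N + 1) :=
    (summable_nat_add_iff (f := fun m => 1 / d (m+1)) N).2 hg.sum_d
  obtain ⟨t, rfl⟩ := Nat.exists_eq_add_of_le hn
  rw [Finset.sum_range_add] at h1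
  have hs1 : ∑ m ∈ Finset.range N, ∫ x in Ico (a (m+1)) (a m) ∩ tauN τ a (N+t) ⁻¹' Jint k 0, f x
      ≤ (1/k) * Dconst a d N := by
    unfold Dconst
    rw [Finset.mul_sum]
    refine Finset.sum_le_sum fun m hmN => ?_
    have hmN := Finset.mem_range.1 hmN
    have hp := hg.pos (m+1)
    refine (hbm m (by omega) (1 / a (m+1)) (by positivity) ?_).trans (le_of_eq ?_)
    · intro x hx
      refine (hinv x ⟨hp.le.trans hx.1, hx.2.trans_le (hg.le_one m)⟩ (hp.trans_le hx.1)).trans ?_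
      exact one_div_le_one_div_of_le hp hx.1
    · have := hg.d_pos m
      field_simp
  have hs2 : ∑ m ∈ Finset.range t, ∫ x in Ico (a (N+m+1)) (a (N+m)) ∩
      tauN τ a (N+t) ⁻¹' Jint k 0, f x ≤ (f 0/k) * D₁ d N := by
    have h3 : ∑ m ∈ Finset.range t, ∫ x in Ico (a (N+m+1)) (a (N+m)) ∩
      tauN τ a (N+t) ⁻¹' Jint k 0, f x ≤ ∑ m ∈ Finset.range t, (f 0/k) * (1 / d (m+N+1)) := by
      refine Finset.sum_le_sum fun m hmt => ?_
      have hmt := Finset.mem_range.1 hmt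
      refine (hbm (N+m) (by omega) (f 0) hf0n ?_).trans (le_of_eq ?_)
      · intro x hx
        exact hf0 x ⟨(hg.pos _).le.trans hx.1, hx.2.trans_le (hg.le_one _)⟩
      · rw [add_comm N m]
        have := hg.d_pos (m+N)
        field_simp
    refine h3.trans ?_
    rw [← Finset.mul_sum]
    refine mul_le_mul_of_nonneg_left ?_ (by positivity)
    refine hsumm.sum_le_tsum _ fun m _ => ?_
    have := hg.d_pos (m+N)
    positivity
  intro x hx
  refine (hf0 x hx).trans ?_
  rw [le_div_iff₀ (by linarith)]
  have h6 : (1/k) * f 0 ≤ (1/k) * (f 0 * a (N+t) + Dconst a d N + f 0 * D₁ d N) := by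
    calc (1/k) * f 0 ≤ f 0 * (a (N+t) / k) + ((1/k) * Dconst a d N + (f 0/k) * D₁ d N) := by
          linarith
      _ = _ := by ring
  have h7 := le_of_mul_le_mul_left h6 (by positivity)
  linarith

lemma u16_fixsum {σ : ℝ → ℝ} (hσ : Measurable σ) {k : ℕ} (hk : 1 ≤ k) {f : ℝ → ℝ}
    (hf : U16Fix σ k f) (l : ℕ) (hl : l ≤ k) :
    ∫ x in Ico 0 ((l:ℝ)/k), f x = ∫ x in Ico 0 1 ∩ σ ⁻¹' Ico 0 ((l:ℝ)/k), f x := by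
  have hk' : (0:ℝ) < k := by exact_mod_cast hk
  induction l with
  | zero => simp
  | succ l ih =>
    have hU : Ico 0 (((l+1:ℕ):ℝ)/k) = Ico 0 ((l:ℝ)/k) ∪ Jint k l := by
      unfold Jint
      rw [Ico_union_Ico_eq_Ico (by positivity) (by gcongr; linarith)]
      push_cast; rfl
    have hd : Disjoint (Ico 0 ((l:ℝ)/k)) (Jint k l) := Ico_disjoint_Ico_same
    have hlk : (l:ℝ)/k ≤ 1 := by
      rw [div_le_one hk']; exact_mod_cast (by omega : l ≤ k)
    rw [hU, setIntegral_union hd (u16_J_meas k l)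
      (hf.int.mono_set (Ico_subset_Ico le_rfl hlk)) (hf.int.mono_set (u16_J_sub hk (by omega))),
      preimage_union, inter_union_distrib_left,
      setIntegral_union ((hd.preimage σ).mono inter_subset_right inter_subset_right)
        (measurableSet_Ico.inter (hσ (u16_J_meas k l)))
        (hf.int.mono_set inter_subset_left) (hf.int.mono_set inter_subset_left),
      ih (by omega), hf.fix l (by omega)]

lemma u16_inv {τ a d N} (hg : U16Good τ a d N) {n k : ℕ} (hk : 1 ≤ k) {f : ℝ → ℝ}
    (hf : U16Fix (tauN τ a n) k f) {M : ℝ} (hM : 0 ≤ M) (hfM : ∀ x ∈ Ico (0:ℝ) 1, f x ≤ M)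
    {t : ℝ} (ht : t ∈ Ico (0:ℝ) 1) :
    |(∫ x in Icc 0 t, f x) - ∫ x in Ico 0 1 ∩ τ ⁻¹' Icc 0 t, f x| ≤ M * (1/k) + M * a n := by
  have hk' : (0:ℝ) < k := by exact_mod_cast hk
  have hm := u16_tauN_meas (a := a) hg.meas n
  have han := hg.pos n
  have hmono : ∀ X Y : Set ℝ, MeasurableSet Y → X ⊆ Y → Y ⊆ Ico 0 1 →
      ∫ x in X, f x ≤ ∫ x in Y, f x := by
    intro X Y hY hXY hY1
    exact setIntegral_mono_set (hf.int.mono_set hY1) ((ae_restrict_iff' hY).2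
        (Eventually.of_forall fun x hx => hf.nn x (hY1 hx))) hXY.eventuallyLE
  set i := ⌊t * k⌋₊ with hi
  have hik : i < k := u16_floor_lt hk ht
  have htJ : t ∈ Jint k i := (u16_mem_J hk i t).2 ⟨ht.1, rfl⟩
  have hs1 : Ico 0 ((i:ℝ)/k) ⊆ Icc 0 t := fun x hx => ⟨hx.1, hx.2.le.trans htJ.1⟩
  have hs2 : Icc 0 t ⊆ Ico 0 (((i+1:ℕ):ℝ)/k) := fun x hx =>
    ⟨hx.1, hx.2.trans_lt (by push_cast; exact htJ.2)⟩
  have hle1 : ((i+1:ℕ):ℝ)/k ≤ 1 := by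
    rw [div_le_one hk']; exact_mod_cast hik
  have hlow : (0:ℝ) ≤ (i:ℝ)/k := by positivity
  have hsub1 : Ico 0 (((i+1:ℕ):ℝ)/k) ⊆ Ico 0 1 := Ico_subset_Ico le_rfl hle1
  have g1 := u16_fixsum hm hk hf i hik.le
  have g2 := u16_fixsum hm hk hf (i+1) hik
  have g3 : ∫ x in Ico 0 (((i+1:ℕ):ℝ)/k), f x ≤ (∫ x in Ico 0 ((i:ℝ)/k), f x) + M * (1/k) := by
    have hU : Ico 0 (((i+1:ℕ):ℝ)/k) = Ico 0 ((i:ℝ)/k) ∪ Jint k i := by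
      unfold Jint
      rw [Ico_union_Ico_eq_Ico hlow (by gcongr; linarith)]
      push_cast; rfl
    have hd : Disjoint (Ico 0 ((i:ℝ)/k)) (Jint k i) := Ico_disjoint_Ico_same
    have hJs := u16_J_sub hk hik
    rw [hU, setIntegral_union hd (u16_J_meas k i)
      (hf.int.mono_set (by rw [hU] at hsub1; exact subset_union_left.trans hsub1))
      (hf.int.mono_set hJs)]
    have := u16_ibd hf.int (u16_J_meas k i) hJs (p := (i:ℝ)/k) (w := 1/k) (by positivity) hM
      (by intro x hx; refine ⟨hx.1, hx.2.trans_le (le_of_eq (by ring))⟩) (fun x hx => hfM x (hJs hx))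
    linarith
  have q1 := hmono _ _ measurableSet_Icc hs1 (hs2.trans hsub1)
  have q2 := hmono _ _ measurableSet_Ico hs2 hsub1
  have q3 := hmono (Ico 0 1 ∩ tauN τ a n ⁻¹' Ico 0 ((i:ℝ)/k)) (Ico 0 1 ∩ tauN τ a n ⁻¹' Icc 0 t)
    (measurableSet_Ico.inter (hm measurableSet_Icc))
    (inter_subset_inter_right _ (preimage_mono hs1)) inter_subset_left
  have q4 := hmono (Ico 0 1 ∩ tauN τ a n ⁻¹' Icc 0 t) (Ico 0 1 ∩ tauN τ a n ⁻¹' Ico 0 (((i+1:ℕ):ℝ)/k))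
    (measurableSet_Ico.inter (hm measurableSet_Ico))
    (inter_subset_inter_right _ (preimage_mono hs2)) inter_subset_left
  have r1 : |(∫ x in Icc 0 t, f x) - ∫ x in Ico 0 1 ∩ tauN τ a n ⁻¹' Icc 0 t, f x| ≤ M * (1/k) := by
    rw [abs_le]; constructor <;> linarith
  have hsplit : ∀ E : Set ℝ, MeasurableSet E → ∫ x in Ico 0 1 ∩ E, f x =
      (∫ x in Ico 0 (a n) ∩ E, f x) + ∫ x in Ico (a n) 1 ∩ E, f x := by
    intro E hE
    rw [← setIntegral_union (Ico_disjoint_Ico_same.mono inter_subset_left inter_subset_left)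
      (measurableSet_Ico.inter hE)
      (hf.int.mono_set (inter_subset_left.trans (Ico_subset_Ico le_rfl (hg.le_one n))))
      (hf.int.mono_set (inter_subset_left.trans (Ico_subset_Ico han.le le_rfl))),
      ← union_inter_distrib_right, Ico_union_Ico_eq_Ico han.le (hg.le_one n)]
  have hsame : Ico (a n) 1 ∩ tauN τ a n ⁻¹' Icc 0 t = Ico (a n) 1 ∩ τ ⁻¹' Icc 0 t := by
    ext x
    simp only [mem_inter_iff, mem_preimage, and_congr_right_iff]
    intro hx
    simp [tauN, not_lt.2 hx.1]
  have hsm : ∀ E : Set ℝ, MeasurableSet E → 0 ≤ ∫ x in Ico 0 (a n) ∩ E, f x ∧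
      ∫ x in Ico 0 (a n) ∩ E, f x ≤ M * a n := by
    intro E hE
    have hs : Ico 0 (a n) ∩ E ⊆ Ico 0 1 :=
      inter_subset_left.trans (Ico_subset_Ico le_rfl (hg.le_one n))
    refine ⟨setIntegral_nonneg (measurableSet_Ico.inter hE) fun x hx => hf.nn x (hs hx), ?_⟩
    exact u16_ibd hf.int (measurableSet_Ico.inter hE) hs (p := 0) han.le hM
      (by rw [zero_add]; exact inter_subset_left) fun x hx => hfM x (hs hx)
  have s1 := hsplit _ (hm (measurableSet_Icc (a := 0) (b := t)))
  have s2 := hsplit _ (hg.meas (measurableSet_Icc (a := 0) (b := t)))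
  rw [hsame] at s1
  have t1 := hsm _ (hm (measurableSet_Icc (a := 0) (b := t)))
  have t2 := hsm _ (hg.meas (measurableSet_Icc (a := 0) (b := t)))
  rw [abs_le] at r1 ⊢
  constructor <;> linarith [r1.1, r1.2, t1.1, t1.2, t2.1, t2.2]

lemma u16_ae {F : ℕ → ℝ → ℝ} {g : ℝ → ℝ} (hF : ∀ j, AntitoneOn (F j) (Ico 0 1))
    (hFi : ∀ j, IntegrableOn (F j) (Ico 0 1)) (hg : IntegrableOn g (Ico 0 1))
    (hw : ∀ u v : ℝ, Tendsto (fun j => ∫ x in Ico 0 1 ∩ Ico u v, F j x) atTop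
      (nhds (∫ x in Ico 0 1 ∩ Ico u v, g x))) :
    ∀ᵐ x, x ∈ Ico (0:ℝ) 1 → Tendsto (fun j => F j x) atTop (nhds (g x)) := by
  have hgi : IntervalIntegrable g volume 0 1 := by
    rw [intervalIntegrable_iff_integrableOn_Ico_of_le zero_le_one]; exact hg
  have hne : ∀ᵐ x : ℝ, x ≠ 0 := by simp [ae_iff, measure_singleton]
  filter_upwards [hgi.ae_hasDerivAt_integral, hne] with x hx hx0 hx1
  rw [uIcc_of_le zero_le_one] at hx
  have hd := hx ⟨hx1.1, hx1.2.le⟩ 0 ⟨le_rfl, zero_le_one⟩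
  have hxpos : 0 < x := lt_of_le_of_ne hx1.1 (Ne.symm hx0)
  rw [Metric.tendsto_atTop']
  intro ε hε
  have hlo := (hasDerivAt_iff_isLittleO.1 hd).def (half_pos hε)
  obtain ⟨δ, hδ, hball⟩ := Metric.eventually_nhds_iff.1 hlo
  obtain ⟨h, hh0, hh⟩ : ∃ h, 0 < h ∧ h < min δ (min x (1 - x)) :=
    exists_between (lt_min hδ (lt_min hxpos (by linarith [hx1.2])))
  obtain ⟨hh1, hh2, hh3⟩ : h < δ ∧ h < x ∧ h < 1 - x := by
    simpa [lt_min_iff] using hh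
  have hsubset : ∀ u v : ℝ, 0 ≤ u → v ≤ 1 → Ico 0 1 ∩ Ico u v = Ico u v := by
    intro u v hu hv
    exact inter_eq_right.2 (Ico_subset_Ico hu hv)
  have hGd : ∀ u v : ℝ, 0 ≤ u → u ≤ v → v ≤ 1 →
      ∫ y in Ico 0 1 ∩ Ico u v, g y = (∫ y in (0:ℝ)..v, g y) - ∫ y in (0:ℝ)..u, g y := by
    intro u v hu huv hv
    have i1 : IntervalIntegrable g volume 0 v := hgi.mono_set (by
      rw [uIcc_of_le (hu.trans huv), uIcc_of_le zero_le_one]; exact Icc_subset_Icc le_rfl hv)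
    have i2 : IntervalIntegrable g volume 0 u := hgi.mono_set (by
      rw [uIcc_of_le hu, uIcc_of_le zero_le_one]; exact Icc_subset_Icc le_rfl (huv.trans hv))
    rw [hsubset u v hu hv, intervalIntegral.integral_interval_sub_left i1 i2,
      intervalIntegral.integral_of_le huv, integral_Ico_eq_integral_Ioo,
      integral_Ioc_eq_integral_Ioo]
  have b1 := hball (y := x + h) (by simp [abs_of_pos hh0, hh1])
  have b2 := hball (y := x - h) (by simp [abs_of_pos hh0, hh1])
  simp only [smul_eq_mul, Real.norm_eq_abs, add_sub_cancel_left, abs_of_pos hh0] at b1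
  simp only [smul_eq_mul, Real.norm_eq_abs, sub_sub_cancel_left, abs_neg, abs_of_pos hh0] at b2
  have w1 := hw x (x+h)
  have w2 := hw (x-h) x
  rw [hGd x (x+h) hxpos.le (by linarith) (by linarith)] at w1
  rw [hGd (x-h) x (by linarith) (by linarith) hx1.2.le] at w2
  rw [abs_le] at b1 b2
  have e1 := w1.eventually (lt_mem_nhds (a := (g x - ε) * h) (by nlinarith [b1.1]))
  have e2 := w2.eventually_lt_const (u := (g x + ε) * h) (by nlinarith [b2.1, b2.2])
  obtain ⟨J, hJ⟩ := eventually_atTop.1 (e1.and e2)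
  refine ⟨J, fun j hj => ?_⟩
  obtain ⟨f1, f2⟩ := hJ j hj.le
  rw [hsubset _ _ hxpos.le (by linarith)] at f1
  rw [hsubset _ _ (by linarith) hx1.2.le] at f2
  have s1 : Ico x (x+h) ⊆ Ico 0 1 := Ico_subset_Ico hxpos.le (by linarith)
  have s2 : Ico (x-h) x ⊆ Ico 0 1 := Ico_subset_Ico (by linarith) hx1.2.le
  have c1 : ∫ y in Ico x (x+h), F j y ≤ ∫ y in Ico x (x+h), F j x :=
    setIntegral_mono_on ((hFi j).mono_set s1) (integrableOn_const measure_Ico_lt_top.ne)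
      measurableSet_Ico (fun y hy => hF j hx1 (s1 hy) hy.1)
  have c2 : ∫ y in Ico (x-h) x, F j x ≤ ∫ y in Ico (x-h) x, F j y :=
    setIntegral_mono_on (integrableOn_const measure_Ico_lt_top.ne) ((hFi j).mono_set s2)
      measurableSet_Ico (fun y hy => hF j (s2 hy) hx1 hy.2.le)
  rw [setIntegral_const, Real.volume_real_Ico_of_le (by linarith), smul_eq_mul] at c1 c2
  rw [Real.dist_eq, abs_lt]
  constructor
  · have : (g x - ε) * h < F j x * h := by nlinarith
    have := lt_of_mul_lt_mul_right this hh0.le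
    linarith
  · have : F j x * h < (g x + ε) * h := by nlinarith
    have := lt_of_mul_lt_mul_right this hh0.le
    linarith

lemma u16_unif {τ a d N} (hg : U16Good τ a d N) : ∃ M : ℝ, 0 ≤ M ∧ ∀ n k : ℕ, N ≤ n →
    a n + D₁ d N < 1 → 1 ≤ k → ∀ f, U16Fix (tauN τ a n) k f → ∀ x ∈ Ico (0:ℝ) 1, f x ≤ M := by
  classical
  by_cases hex : ∃ n, N ≤ n ∧ a n + D₁ d N < 1
  · have hD0 : 0 ≤ Dconst a d N := by
      unfold Dconst
      refine Finset.sum_nonneg fun m _ => ?_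
      have := hg.pos (m+1)
      have := hg.d_pos m
      positivity
    have hs := Nat.find_spec hex
    refine ⟨Dconst a d N / (1 - a (Nat.find hex) - D₁ d N), div_nonneg hD0 (by linarith [hs.2]), ?_⟩
    intro n k hn hD hk f hf x hx
    refine (u16_bound hg hn hD hk hf x hx).trans ?_
    have h1 : a n ≤ a (Nat.find hex) := hg.a_anti.antitone (Nat.find_min' hex ⟨hn, hD⟩)
    apply div_le_div_of_nonneg_left hD0 (by linarith [hs.2]) (by linarith)
  · refine ⟨0, le_rfl, fun n k hn hD => ?_⟩
    exact absurd ⟨n, hn, hD⟩ hex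

lemma u16_ind {S : Set ℝ} (hS : MeasurableSet S) (f : ℝ → ℝ) :
    ∫ x, S.indicator (fun _ => (1:ℝ)) x * f x ∂lam = ∫ x in Ico 0 1 ∩ S, f x := by
  have : (fun x => S.indicator (fun _ => (1:ℝ)) x * f x) = S.indicator f := by
    ext x; by_cases h : x ∈ S <;> simp [h]
  rw [this, integral_indicator hS, u16_lam, Measure.restrict_restrict hS, inter_comm]

lemma u16_main {τ a d N} (hg : U16Good τ a d N) (F : ℕ → ℝ → ℝ) (flim : ℝ → ℝ) (ns ks : ℕ → ℕ)
    (hflim : Integrable flim lam)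
    (hns : ∀ j, N ≤ ns j ∧ a (ns j) + D₁ d N < 1 ∧ 1 ≤ ks j)
    (hn : Tendsto ns atTop atTop) (hk : Tendsto ks atTop atTop)
    (hF : ∀ j, U16Fix (tauN τ a (ns j)) (ks j) (F j))
    (hweak : ∀ φ : ℝ → ℝ, Measurable φ → (∃ K : ℝ, ∀ x ∈ Icc (0:ℝ) 1, |φ x| ≤ K) →
        Tendsto (fun j => ∫ x, φ x * F j x ∂lam) atTop (nhds (∫ x, φ x * flim x ∂lam))) :
    Tendsto (fun j => ∫ x, |F j x - flim x| ∂lam) atTop (nhds 0) ∧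
      (∀ᵐ x ∂lam, Tendsto (fun j => F j x) atTop (nhds (flim x))) ∧
      (∀ A : Set ℝ, MeasurableSet A →
        lam.withDensity (fun x => ENNReal.ofReal (flim x)) (τ ⁻¹' A) =
        lam.withDensity (fun x => ENNReal.ofReal (flim x)) A) := by
  obtain ⟨M, hM0, hM⟩ := u16_unif hg
  have hFM : ∀ j, ∀ x ∈ Ico (0:ℝ) 1, F j x ≤ M := fun j =>
    hM _ _ (hns j).1 (hns j).2.1 (hns j).2.2 _ (hF j)
  have hset : ∀ S : Set ℝ, MeasurableSet S → Tendsto (fun j => ∫ x in Ico 0 1 ∩ S, F j x) atTop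
      (nhds (∫ x in Ico 0 1 ∩ S, flim x)) := by
    intro S hS
    have := hweak (S.indicator fun _ => (1:ℝ)) (measurable_const.indicator hS) ⟨1, fun x _ => by
      by_cases h : x ∈ S <;> simp [h]⟩
    simpa only [u16_ind hS] using this
  have hflim' : IntegrableOn flim (Ico 0 1) := by rwa [u16_lam] at hflim
  have hae0 := u16_ae (fun j => u16_anti hg (hg.N_pos.trans (hns j).1) (hns j).2.2 (hF j))
    (fun j => (hF j).int) hflim' (fun u v => hset _ measurableSet_Ico)
  have hae : ∀ᵐ x ∂lam, Tendsto (fun j => F j x) atTop (nhds (flim x)) := by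
    rw [u16_lam, ae_restrict_iff' measurableSet_Ico]; exact hae0
  have hmem : ∀ᵐ x ∂lam, x ∈ Ico (0:ℝ) 1 := by
    rw [u16_lam]; exact ae_restrict_mem measurableSet_Ico
  have hFint : ∀ j, Integrable (F j) lam := fun j => by rw [u16_lam]; exact (hF j).int
  haveI : IsFiniteMeasure lam := by rw [u16_lam]; infer_instance
  have hnn : ∀ᵐ x ∂lam, 0 ≤ flim x := by
    filter_upwards [hae, hmem] with x hx hx1
    exact ge_of_tendsto' hx fun j => (hF j).nn x hx1
  refine ⟨?_, hae, ?_⟩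
  · have := tendsto_integral_of_dominated_convergence (μ := lam)
      (F := fun j x => |F j x - flim x|) (f := fun _ => (0:ℝ)) (fun x => M + |flim x|)
      (fun j => ((hFint j).sub hflim).abs.aestronglyMeasurable)
      ((integrable_const M).add hflim.abs) ?_ ?_
    · simpa using this
    · intro j
      filter_upwards [hmem] with x hx
      rw [Real.norm_eq_abs, abs_abs]
      refine (abs_sub _ _).trans ?_
      rw [abs_of_nonneg ((hF j).nn x hx)]
      linarith [hFM j x hx]
    · filter_upwards [hae] with x hx
      have := (hx.sub_const (flim x)).abs
      simpa using this
  · have hinvt : ∀ t ∈ Ico (0:ℝ) 1, ∫ x in Icc 0 t, flim x = ∫ x in Ico 0 1 ∩ τ ⁻¹' Icc 0 t, flim x := by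
      intro t ht
      have e : Ico 0 1 ∩ Icc 0 t = Icc 0 t := inter_eq_right.2 fun x hx => ⟨hx.1, hx.2.trans_lt ht.2⟩
      have t1 := hset (Icc 0 t) measurableSet_Icc
      have t2 := hset _ (hg.meas (measurableSet_Icc (a := (0:ℝ)) (b := t)))
      rw [e] at t1
      have t3 := (t1.sub t2).abs
      have t4 : Tendsto (fun j => M * (1/(ks j:ℝ)) + M * a (ns j)) atTop (nhds (M * 0 + M * 0)) :=
        ((tendsto_one_div_atTop_nhds_zero_nat.comp hk).const_mul M).add
          ((hg.a_lim.comp hn).const_mul M)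
      have t5 := le_of_tendsto_of_tendsto' t3 t4 fun j =>
        u16_inv hg (hns j).2.2 (hF j) hM0 (hFM j) ht
      have : |(∫ x in Icc 0 t, flim x) - ∫ x in Ico 0 1 ∩ τ ⁻¹' Icc 0 t, flim x| = 0 :=
        le_antisymm (by simpa using t5) (abs_nonneg _)
      linarith [abs_eq_zero.1 this]
    set ν := lam.withDensity (fun x => ENNReal.ofReal (flim x)) with hν
    have hνS : ∀ S : Set ℝ, MeasurableSet S → ν S = ENNReal.ofReal (∫ x in Ico 0 1 ∩ S, flim x) := by
      intro S hS
      rw [hν, withDensity_apply _ hS, ← ofReal_integral_eq_lintegral_ofReal hflim.integrableOn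
        (ae_restrict_of_ae hnn)]
      congr 1
      rw [u16_lam, Measure.restrict_restrict hS, inter_comm]
    haveI : IsFiniteMeasure ν := isFiniteMeasure_withDensity_ofReal hflim.2
    have hmap : ν.map τ = ν := by
      refine Measure.ext_of_Iic _ _ fun t => ?_
      rw [Measure.map_apply hg.meas measurableSet_Iic, hνS _ (hg.meas measurableSet_Iic),
        hνS _ measurableSet_Iic]
      congr 1
      have hτ : ∀ x ∈ Ico (0:ℝ) 1, τ x ∈ Icc (0:ℝ) 1 := fun x hx => hg.mapsTo x ⟨hx.1, hx.2.le⟩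
      rcases lt_or_ge t 0 with h0 | h0
      · have e1 : Ico 0 1 ∩ τ ⁻¹' Iic t = ∅ := by
          ext x
          simp only [mem_inter_iff, mem_preimage, mem_Iic, mem_empty_iff_false, iff_false]
          rintro ⟨h1, h2⟩; linarith [(hτ x h1).1]
        have e2 : Ico 0 1 ∩ Iic t = ∅ := by
          ext x
          simp only [mem_inter_iff, mem_Iic, mem_empty_iff_false, iff_false]
          rintro ⟨h1, h2⟩; linarith [h1.1]
        rw [e1, e2]
      · rcases lt_or_ge t 1 with h1 | h1
        · have e1 : Ico 0 1 ∩ τ ⁻¹' Iic t = Ico 0 1 ∩ τ ⁻¹' Icc 0 t := by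
            ext x
            constructor
            · rintro ⟨h1, h2⟩; exact ⟨h1, (hτ x h1).1, h2⟩
            · rintro ⟨h1, h2⟩; exact ⟨h1, h2.2⟩
          have e2 : Ico 0 1 ∩ Iic t = Icc 0 t := by
            ext x
            constructor
            · rintro ⟨h1, h2⟩; exact ⟨h1.1, h2⟩
            · rintro ⟨h3, h2⟩; exact ⟨⟨h3, h2.trans_lt h1⟩, h2⟩
          rw [e1, e2, hinvt t ⟨h0, h1⟩]
        · have e1 : Ico 0 1 ⊆ τ ⁻¹' Iic t := fun x hx => (hτ x hx).2.trans h1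
          have e2 : Ico (0:ℝ) 1 ⊆ Iic t := fun x hx => hx.2.le.trans h1
          rw [inter_eq_left.2 e1, inter_eq_left.2 e2]
    intro A hA
    rw [← Measure.map_apply hg.meas hA, hmap]

/-- measurable modification of `τ` -/
noncomputable def u16mod (τ : ℝ → ℝ) : ℝ → ℝ := (Ioo (0:ℝ) 1).indicator τ

lemma u16_mod_ae (τ : ℝ → ℝ) : ∀ᵐ x ∂lam, u16mod τ x = τ x := by
  rw [lam, ← Measure.restrict_congr_set (Ioo_ae_eq_Icc (a := (0:ℝ)) (b := 1))]
  filter_upwards [ae_restrict_mem measurableSet_Ioo] with x hx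
  simp [u16mod, hx]

lemma u16_good {τ a d N} (h : PCApprox τ a d N) : U16Good (u16mod τ) a d N := by
  have hpos : ∀ n, 0 < a n := fun n =>
    (h.a_anti.antitone.le_of_tendsto h.a_lim (n+1)).trans_lt (h.a_anti (Nat.lt_succ_self n))
  have hle : ∀ n, a n ≤ 1 := fun n => h.a_zero ▸ h.a_anti.antitone (Nat.zero_le n)
  have hsub : ∀ m, Ico (a (m+1)) (a m) ⊆ Ioo 0 1 := fun m x hx =>
    ⟨(hpos _).trans_le hx.1, hx.2.trans_le (hle m)⟩
  have heq : ∀ m, EqOn τ (u16mod τ) (Ico (a (m+1)) (a m)) := fun m x hx => by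
    simp [u16mod, indicator_of_mem (hsub m hx)]
  have hpm : ∀ m, a (m+1) ∈ Ico (a (m+1)) (a m) := fun m =>
    ⟨le_rfl, h.a_anti (Nat.lt_succ_self m)⟩
  have hcover : ∀ x ∈ Ioo (0:ℝ) 1, ∃ m, x ∈ Ico (a (m+1)) (a m) := by
    classical
    intro x hx
    have hex : ∃ m, a m ≤ x := by
      obtain ⟨m, hm⟩ := (h.a_lim.eventually (gt_mem_nhds hx.1)).exists
      exact ⟨m, hm.le⟩
    have h1 := Nat.find_spec hex
    rcases hfd : Nat.find hex with _ | m
    · rw [hfd, h.a_zero] at h1; linarith [hx.2]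
    · refine ⟨m, by rwa [hfd] at h1, ?_⟩
      exact not_le.1 (Nat.find_min hex (m := m) (by omega))
  refine ⟨?_, ?_, h.a_zero, h.a_anti, h.a_lim, ?_, ?_, ?_, h.d_pos, h.N_pos, h.sum_d⟩
  · intro B hB
    have hpiece : ∀ m, MeasurableSet (Ico (a (m+1)) (a m) ∩ τ ⁻¹' B) := by
      intro m
      have h1 := (continuousOn_iff_continuous_restrict.1 (h.cont m)).measurable hB
      have h2 := (measurableSet_Ico (a := a (m+1)) (b := a m)).subtype_image h1
      convert h2 using 1
      ext x
      constructor
      · rintro ⟨hx, hxB⟩; exact ⟨⟨x, hx⟩, hxB, rfl⟩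
      · rintro ⟨⟨y, hy⟩, hyB, rfl⟩; exact ⟨hy, hyB⟩
    have : u16mod τ ⁻¹' B = (⋃ m, Ico (a (m+1)) (a m) ∩ τ ⁻¹' B) ∪
        ((Ioo (0:ℝ) 1)ᶜ ∩ (fun _ : ℝ => (0:ℝ)) ⁻¹' B) := by
      ext x
      by_cases hx : x ∈ Ioo (0:ℝ) 1
      · have e : u16mod τ x = τ x := by simp only [u16mod, indicator_of_mem hx]
        constructor
        · intro hxB
          obtain ⟨m, hm⟩ := hcover x hx
          refine Or.inl (mem_iUnion.2 ⟨m, hm, ?_⟩)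
          show τ x ∈ B
          rw [← e]; exact hxB
        · rintro (hxB | hxB)
          · obtain ⟨m, _, hm⟩ := mem_iUnion.1 hxB
            show u16mod τ x ∈ B
            rw [e]; exact hm
          · exact absurd hx hxB.1
      · have e : u16mod τ x = 0 := by simp only [u16mod, indicator_of_notMem hx]
        constructor
        · intro hxB
          refine Or.inr ⟨hx, ?_⟩
          show (0:ℝ) ∈ B
          rw [← e]; exact hxB
        · rintro (hxB | hxB)
          · obtain ⟨m, hm, _⟩ := mem_iUnion.1 hxB
            exact absurd (hsub m hm) hx
          · show u16mod τ x ∈ B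
            rw [e]; exact hxB.2
    rw [this]
    exact (MeasurableSet.iUnion hpiece).union (measurableSet_Ioo.compl.inter (measurable_const hB))
  · intro x hx
    by_cases hx' : x ∈ Ioo (0:ℝ) 1
    · simp only [u16mod, indicator_of_mem hx']; exact h.mapsTo hx
    · simp only [u16mod, indicator_of_notMem hx']; exact ⟨le_rfl, zero_le_one⟩
  · intro m; exact (h.conv m).congr (heq m)
  · intro m; rw [← heq m (hpm m)]; exact h.map_a m
  · intro m x hx
    rw [← heq m hx]
    rcases hx.1.eq_or_lt with he | hlt
    · rw [← he, h.map_a m]; simp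
    · have := (h.conv m).le_slope_of_hasDerivWithinAt (hpm m) hx hlt
        ((h.deriv_a m).mono Ico_subset_Ici_self)
      rw [slope_def_field, h.map_a m, sub_zero, le_div_iff₀ (by linarith)] at this
      exact this

/-- The family of normalized Ulam fixed points `f n k` (for `n ≥ N` with `a n + D₁ < 1`
and `k ≥ 1`) is uniformly bounded in `L^∞`. Moreover, if `n j → ∞`, `k j → ∞` and
`f (n j) (k j)` converges weakly in `L¹` to an integrable `flim`, then the convergence also
holds in `L¹`-norm and `λ`-a.e., and `flim` is a fixed point of the Frobenius–Perron
operator `P_τ`, i.e. the measure `flim·λ` is `τ`-invariant. -/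
theorem stmt16 (τ : ℝ → ℝ) (a d : ℕ → ℝ) (N : ℕ)
    (hτ : PCApprox τ a d N)
    (f : ℕ → ℕ → ℝ → ℝ)
    (hfix : ∀ n k : ℕ, N ≤ n → a n + D₁ d N < 1 → 1 ≤ k →
      IsUlamFixed (tauN τ a n) k (f n k)) :
    (∃ M : ENNReal, M < ⊤ ∧ ∀ n k : ℕ, N ≤ n → a n + D₁ d N < 1 → 1 ≤ k →
      esssup (f n k) ≤ M) ∧
    (∀ (flim : ℝ → ℝ) (ns ks : ℕ → ℕ), MeasureTheory.Integrable flim lam →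
      (∀ j, N ≤ ns j ∧ a (ns j) + D₁ d N < 1 ∧ 1 ≤ ks j) →
      Filter.Tendsto ns Filter.atTop Filter.atTop →
      Filter.Tendsto ks Filter.atTop Filter.atTop →
      (∀ φ : ℝ → ℝ, Measurable φ → (∃ K : ℝ, ∀ x ∈ Set.Icc (0:ℝ) 1, |φ x| ≤ K) →
        Filter.Tendsto (fun j => ∫ x, φ x * f (ns j) (ks j) x ∂lam) Filter.atTop
          (nhds (∫ x, φ x * flim x ∂lam))) →
      Filter.Tendsto (fun j => ∫ x, |f (ns j) (ks j) x - flim x| ∂lam)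
        Filter.atTop (nhds 0) ∧
      (∀ᵐ x ∂lam, Filter.Tendsto (fun j => f (ns j) (ks j) x) Filter.atTop
        (nhds (flim x))) ∧
      (∀ A : Set ℝ, MeasurableSet A → A ⊆ Set.Icc (0:ℝ) 1 →
        lam.withDensity (fun x => ENNReal.ofReal (flim x)) (τ ⁻¹' A) =
        lam.withDensity (fun x => ENNReal.ofReal (flim x)) A)) := by
  have hg := u16_good hτ
  have hmod := u16_mod_ae τ
  have hfix' : ∀ n k : ℕ, N ≤ n → a n + D₁ d N < 1 → 1 ≤ k →
      U16Fix (tauN (u16mod τ) a n) k (f n k) := by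
    intro n k hn hD hk
    refine u16_fix_of hk (u16_tauN_meas hg.meas n) ?_ (hfix n k hn hD hk)
    filter_upwards [hmod] with x hx
    simp only [tauN, hx]
  refine ⟨?_, ?_⟩
  · obtain ⟨M, hM0, hM⟩ := u16_unif hg
    refine ⟨ENNReal.ofReal M, ENNReal.ofReal_lt_top, fun n k hn hD hk => ?_⟩
    unfold esssup
    refine essSup_le_of_ae_le _ ?_
    rw [u16_lam]
    filter_upwards [ae_restrict_mem measurableSet_Ico] with x hx
    exact ENNReal.ofReal_le_ofReal (hM n k hn hD hk _ (hfix' n k hn hD hk) x hx)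
  · intro flim ns ks hflim hns hn hk hweak
    obtain ⟨h1, h2, h3⟩ := u16_main hg (fun j => f (ns j) (ks j)) flim ns ks hflim hns hn hk
      (fun j => hfix' _ _ (hns j).1 (hns j).2.1 (hns j).2.2) hweak
    refine ⟨h1, h2, fun A hA _ => ?_⟩
    rw [← h3 A hA]
    apply measure_congr
    have h4 := (withDensity_absolutelyContinuous lam
      (fun x => ENNReal.ofReal (flim x))).ae_le hmod
    filter_upwards [h4] with x hx
    apply propext
    show τ x ∈ A ↔ u16mod τ x ∈ A
    rw [hx]
end

section
/- Let τ : [0,1] → [0,1] be defined by τ(x) = 1/((2i+1)/(i(i+1)) − x) − i for x ∈ [1/(i+1), 1/i), i = 1, 2, …, and τ(0) = 0, τ(1) = 1. Then τ admits an absolutely continuous invariant measure: there exists a non-negative function f* ∈ L¹([0,1],λ) with ∫₀¹ f* dλ = 1, λ-a.e. equal to a non-increasing function, such that the probability measure μ = f*·λ is τ-invariant, i.e., μ(τ⁻¹(A)) = μ(A) for every Borel set A ⊆ [0,1]. -/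
open MeasureTheory Set Filter

open scoped ENNReal Topology

/-- inverse branch with index `i` (the branch `i+1` of the map) -/
noncomputable def phi (i : ℕ) (y : ℝ) : ℝ := 1 / ((i:ℝ) + 1) + 1 / ((i:ℝ) + 2) - 1 / (y + (i:ℝ) + 1)

/-- weight (derivative of the inverse branch) -/
noncomputable def wt (i : ℕ) (y : ℝ) : ℝ≥0∞ := ENNReal.ofReal (1 / (y + (i:ℝ) + 1) ^ 2)

/-- transfer operator -/
noncomputable def PF (g : ℝ → ℝ≥0∞) (y : ℝ) : ℝ≥0∞ := ∑' i : ℕ, wt i y * g (phi i y)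

lemma phi_mono (i : ℕ) {x y : ℝ} (hx : 0 ≤ x) (hxy : x ≤ y) : phi i x ≤ phi i y := by
  unfold phi
  have : 1 / (y + (i:ℝ) + 1) ≤ 1 / (x + (i:ℝ) + 1) := by
    apply one_div_le_one_div_of_le <;> [positivity; linarith]
  linarith

lemma phi_strict (i : ℕ) {x y : ℝ} (hx : 0 ≤ x) (hxy : x < y) : phi i x < phi i y := by
  unfold phi
  have : 1 / (y + (i:ℝ) + 1) < 1 / (x + (i:ℝ) + 1) := by
    apply one_div_lt_one_div_of_lt <;> [positivity; linarith]
  linarith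

lemma phi_zero (i : ℕ) : phi i 0 = 1 / ((i:ℝ) + 2) := by
  unfold phi; simp

lemma phi_one (i : ℕ) : phi i 1 = 1 / ((i:ℝ) + 1) := by
  unfold phi
  have : (1:ℝ) + i + 1 = i + 2 := by ring
  rw [this]; ring

lemma phi_mem (i : ℕ) {y : ℝ} (hy : y ∈ Icc (0:ℝ) 1) : phi i y ∈ Icc (0:ℝ) 1 := by
  have h0 := phi_mono i le_rfl hy.1
  have h1 := phi_mono i hy.1 hy.2
  rw [phi_zero] at h0
  rw [phi_one] at h1
  refine ⟨le_trans (by positivity) h0, h1.trans ?_⟩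
  rw [div_le_one (by positivity)]
  have : (0:ℝ) ≤ i := by positivity
  linarith

lemma phi_mem_Ico (i : ℕ) {y : ℝ} (hy : y ∈ Ico (0:ℝ) 1) :
    phi i y ∈ Ico (1 / ((i:ℝ) + 2)) (1 / ((i:ℝ) + 1)) := by
  rw [← phi_zero, ← phi_one]
  exact ⟨phi_mono i le_rfl hy.1, phi_strict i hy.1 hy.2⟩

lemma phi_lt_of_lt {i j : ℕ} (hij : i < j) {x y : ℝ} (hx : x ∈ Ico (0:ℝ) 1)
    (hy : y ∈ Ico (0:ℝ) 1) : phi j y < phi i x := by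
  refine (phi_mem_Ico j hy).2.trans_le (le_trans ?_ (phi_mem_Ico i hx).1)
  apply one_div_le_one_div_of_le (by positivity)
  have : (i:ℝ) + 1 ≤ j := by exact_mod_cast hij
  linarith

lemma phi_inj {i j : ℕ} {x y : ℝ} (hx : x ∈ Ico (0:ℝ) 1)
    (hy : y ∈ Ico (0:ℝ) 1) (h : phi i x = phi j y) : i = j ∧ x = y := by
  have hij : i = j := by
    rcases lt_trichotomy i j with h1 | h1 | h1
    · exact absurd h (phi_lt_of_lt h1 hx hy).ne'
    · exact h1
    · exact absurd h (phi_lt_of_lt h1 hy hx).ne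
  subst hij
  refine ⟨rfl, ?_⟩
  rcases lt_trichotomy x y with h1 | h1 | h1
  · exact absurd h (phi_strict i hx.1 h1).ne
  · exact h1
  · exact absurd h (phi_strict i hy.1 h1).ne'

lemma phi_meas (i : ℕ) : Measurable (phi i) := by
  unfold phi; fun_prop

lemma wt_meas (i : ℕ) : Measurable (wt i) := by
  unfold wt; fun_prop

lemma PF_meas {g : ℝ → ℝ≥0∞} (hg : Measurable g) : Measurable (PF g) := by
  unfold PF
  refine Measurable.tsum fun i => ?_
  exact (wt_meas i).mul (hg.comp (phi_meas i))

lemma phi_deriv (i : ℕ) {y : ℝ} (hy : 0 ≤ y) :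
    HasDerivAt (phi i) (1 / (y + (i:ℝ) + 1) ^ 2) y := by
  unfold phi
  have h1 : HasDerivAt (fun y : ℝ => y + (i:ℝ) + 1) 1 y :=
    ((hasDerivAt_id y).add_const _).add_const _
  have hne : y + (i:ℝ) + 1 ≠ 0 := by positivity
  have h2 := (h1.inv hne).const_sub (1 / ((i:ℝ) + 1) + 1 / ((i:ℝ) + 2))
  have e1 : (fun y : ℝ => 1 / ((i:ℝ) + 1) + 1 / ((i:ℝ) + 2) - 1 / (y + (i:ℝ) + 1)) =
      fun x => 1 / ((i:ℝ) + 1) + 1 / ((i:ℝ) + 2) - (fun y : ℝ => y + (i:ℝ) + 1)⁻¹ x := by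
    funext z; simp
  have e2 : 1 / (y + (i:ℝ) + 1) ^ 2 = -(-1 / (y + (i:ℝ) + 1) ^ 2) := by ring
  rw [e1, e2]
  exact h2

/-- union of the images under all inverse branches -/
def UU (A : Set ℝ) : Set ℝ := ⋃ i : ℕ, phi i '' A

lemma phi_image_meas (i : ℕ) {A : Set ℝ} (hA : MeasurableSet A) (hA1 : A ⊆ Ico (0:ℝ) 1) :
    MeasurableSet (phi i '' A) := by
  apply hA.image_of_continuousOn_injOn
  · intro y hy
    exact (phi_deriv i (hA1 hy).1).continuousAt.continuousWithinAt
  · intro x hx y hy h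
    exact (phi_inj (hA1 hx) (hA1 hy) h).2

lemma lint_UU {g : ℝ → ℝ≥0∞} (hg : Measurable g) {A : Set ℝ} (hA : MeasurableSet A)
    (hA1 : A ⊆ Ico (0:ℝ) 1) : ∫⁻ x in UU A, g x = ∫⁻ y in A, PF g y := by
  unfold UU PF
  rw [lintegral_iUnion (fun i => phi_image_meas i hA hA1), lintegral_tsum]
  · congr 1; funext i
    rw [lintegral_image_eq_lintegral_abs_deriv_mul hA
      (fun y hy => (phi_deriv i (hA1 hy).1).hasDerivWithinAt)
      (fun x hx y hy h => (phi_inj (hA1 hx) (hA1 hy) h).2)]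
    apply setLIntegral_congr_fun hA
    intro y hy
    simp only [wt]
    rw [abs_of_nonneg (by positivity)]
  · exact fun i => ((wt_meas i).mul (hg.comp (phi_meas i))).aemeasurable
  · intro i j hij
    rw [Function.onFun, Set.disjoint_left]
    rintro _ ⟨x, hx, rfl⟩ ⟨y, hy, h⟩
    exact hij (phi_inj (hA1 hy) (hA1 hx) h).1.symm

lemma exists_phi {x : ℝ} (hx : x ∈ Ioo (0:ℝ) 1) : ∃ i : ℕ, ∃ y ∈ Ico (0:ℝ) 1, phi i y = x := by
  obtain ⟨hx0, hx1⟩ := hx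
  have h1 : 1 < 1 / x := by rw [lt_div_iff₀ hx0]; linarith
  obtain ⟨k, hk⟩ : ∃ k, ⌈1 / x⌉₊ = k + 2 := by
    have : 1 < ⌈1 / x⌉₊ := by rw [Nat.lt_ceil]; simpa using h1
    exact ⟨⌈1 / x⌉₊ - 2, by omega⟩
  have h2 : 1 / x ≤ (k:ℝ) + 2 := by
    have := Nat.le_ceil (1 / x); rw [hk] at this; push_cast at this; exact this
  have h3 : (k:ℝ) + 1 < 1 / x := by
    have : k + 1 < ⌈1 / x⌉₊ := by omega
    rw [Nat.lt_ceil] at this; push_cast at this; exact this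
  have hk0 : (0:ℝ) ≤ k := by positivity
  have h4 : x < 1 / ((k:ℝ) + 1) := by
    rw [lt_div_iff₀ hx0] at h3; rw [lt_div_iff₀ (by positivity)]; linarith
  have h5 : 1 / ((k:ℝ) + 2) ≤ x := by
    rw [div_le_iff₀ hx0] at h2; rw [div_le_iff₀ (by positivity)]; linarith
  have hc : ContinuousOn (phi k) (Icc 0 1) := fun y hy =>
    (phi_deriv k hy.1).continuousAt.continuousWithinAt
  obtain ⟨y, hy, rfl⟩ := intermediate_value_Icc (zero_le_one) hc
    (show x ∈ Icc (phi k 0) (phi k 1) by rw [phi_zero, phi_one]; exact ⟨h5, h4.le⟩)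
  refine ⟨k, y, ⟨hy.1, lt_of_le_of_ne hy.2 ?_⟩, rfl⟩
  rintro rfl
  rw [phi_one] at h4
  exact lt_irrefl _ h4

lemma UU_Ico_ae : (UU (Ico (0:ℝ) 1) : Set ℝ) =ᵐ[volume] Ico (0:ℝ) 1 := by
  have h1 : Ioo (0:ℝ) 1 ⊆ UU (Ico (0:ℝ) 1) := by
    intro x hx
    obtain ⟨i, y, hy, h⟩ := exists_phi hx
    exact mem_iUnion.2 ⟨i, y, hy, h⟩
  have h2 : UU (Ico (0:ℝ) 1) ⊆ Icc (0:ℝ) 1 := by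
    refine iUnion_subset fun i => ?_
    rintro _ ⟨y, hy, rfl⟩
    exact phi_mem i ⟨hy.1, hy.2.le⟩
  have h3 : (UU (Ico (0:ℝ) 1) : Set ℝ) =ᵐ[volume] Ioo (0:ℝ) 1 := by
    refine Filter.EventuallyLE.antisymm ?_ h1.eventuallyLE
    exact h2.eventuallyLE.trans Ioo_ae_eq_Icc.symm.le
  exact h3.trans Ioo_ae_eq_Ico

/-- total mass -/
noncomputable def ms (g : ℝ → ℝ≥0∞) : ℝ≥0∞ := ∫⁻ x in Ico (0:ℝ) 1, g x

lemma ms_PF {g : ℝ → ℝ≥0∞} (hg : Measurable g) : ms (PF g) = ms g := by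
  unfold ms
  rw [← lint_UU hg measurableSet_Ico le_rfl, Measure.restrict_congr_set UU_Ico_ae]

lemma wt_anti (i : ℕ) {x y : ℝ} (hx : 0 ≤ x) (hxy : x ≤ y) : wt i y ≤ wt i x := by
  unfold wt
  apply ENNReal.ofReal_le_ofReal
  apply one_div_le_one_div_of_le (by positivity)
  gcongr

lemma PF_anti {g : ℝ → ℝ≥0∞} (hg : AntitoneOn g (Icc (0:ℝ) 1)) :
    AntitoneOn (PF g) (Icc (0:ℝ) 1) := by
  intro x hx y hy hxy
  unfold PF
  refine ENNReal.tsum_le_tsum fun i => ?_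
  exact mul_le_mul' (wt_anti i hx.1 hxy)
    (hg (phi_mem i hx) (phi_mem i hy) (phi_mono i hx.1 hxy))

lemma ms_le {g : ℝ → ℝ≥0∞} (hg : AntitoneOn g (Icc (0:ℝ) 1)) : ms g ≤ g 0 := by
  unfold ms
  calc ∫⁻ x in Ico (0:ℝ) 1, g x ≤ ∫⁻ x in Ico (0:ℝ) 1, g 0 :=
        setLIntegral_mono' measurableSet_Ico
          (fun x hx => hg (by simp) ⟨hx.1, hx.2.le⟩ hx.1)
    _ = g 0 := by simp

lemma lower {g : ℝ → ℝ≥0∞} (hgm : Measurable g) (hg : AntitoneOn g (Icc (0:ℝ) 1)) {y : ℝ}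
    (hy : y ∈ Icc (0:ℝ) 1) : (1/9 : ℝ≥0∞) * ms g ≤ PF g y := by
  have h1 : ms g ≤ PF g 0 := by rw [← ms_PF hgm]; exact ms_le (PF_anti hg)
  have h2 : PF g 1 ≤ PF g y := PF_anti hg hy (by simp) hy.2
  have h3 : (1/9 : ℝ≥0∞) * PF g 0 ≤ PF g 1 := by
    unfold PF
    rw [← ENNReal.tsum_mul_left]
    calc ∑' i : ℕ, (1/9 : ℝ≥0∞) * (wt i 0 * g (phi i 0))
        ≤ ∑' i : ℕ, wt (i+1) 1 * g (phi (i+1) 1) := by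
          refine ENNReal.tsum_le_tsum fun i => ?_
          have e : phi (i+1) 1 = phi i 0 := by
            rw [phi_zero, phi_one]; push_cast; congr 1; ring
          rw [e, ← mul_assoc]
          gcongr
          unfold wt
          have : (1/9 : ℝ≥0∞) = ENNReal.ofReal (1/9) := by
            rw [ENNReal.ofReal_div_of_pos (by norm_num)]; simp
          rw [this, ← ENNReal.ofReal_mul (by norm_num)]
          apply ENNReal.ofReal_le_ofReal
          rw [div_mul_div_comm]
          push_cast
          rw [one_mul]
          apply one_div_le_one_div_of_le (by positivity)
          have : (0:ℝ) ≤ i := by positivity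
          nlinarith
      _ ≤ ∑' i : ℕ, wt i 1 * g (phi i 1) :=
          ENNReal.tsum_comp_le_tsum_of_injective (add_left_injective 1)
            (fun i : ℕ => wt i 1 * g (phi i 1))
  calc (1/9 : ℝ≥0∞) * ms g ≤ (1/9 : ℝ≥0∞) * PF g 0 := by gcongr
    _ ≤ _ := h3.trans h2

/-- the sequence of iterates -/
noncomputable def gs : ℕ → ℝ → ℝ≥0∞
  | 0 => fun _ => 1
  | n+1 => fun y => PF (gs n) y - (1/9 : ℝ≥0∞) * ms (gs n)

lemma gs_meas (n : ℕ) : Measurable (gs n) := by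
  induction n with
  | zero => exact measurable_const
  | succ n ih => exact (PF_meas ih).sub measurable_const

lemma gs_anti (n : ℕ) : AntitoneOn (gs n) (Icc (0:ℝ) 1) := by
  induction n with
  | zero => exact fun _ _ _ _ _ => le_rfl
  | succ n ih =>
    intro x hx y hy hxy
    exact tsub_le_tsub_right (PF_anti ih hx hy hxy) _

lemma gs_eq (n : ℕ) {y : ℝ} (hy : y ∈ Icc (0:ℝ) 1) :
    gs (n+1) y + (1/9 : ℝ≥0∞) * ms (gs n) = PF (gs n) y :=
  tsub_add_cancel_of_le (lower (gs_meas n) (gs_anti n) hy)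

lemma ms_gs_succ (n : ℕ) : ms (gs (n+1)) + (1/9 : ℝ≥0∞) * ms (gs n) = ms (gs n) := by
  conv_rhs => rw [← ms_PF (gs_meas n)]
  have : ms (PF (gs n)) = ∫⁻ y in Ico (0:ℝ) 1, (gs (n+1) y + (1/9 : ℝ≥0∞) * ms (gs n)) := by
    unfold ms
    apply setLIntegral_congr_fun measurableSet_Ico
    intro y hy
    exact (gs_eq n ⟨hy.1, hy.2.le⟩).symm
  rw [this, lintegral_add_left (gs_meas _)]
  simp [ms]

lemma ms_gs (n : ℕ) : ms (gs n) = ENNReal.ofReal ((8/9) ^ n) := by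
  induction n with
  | zero => simp [ms, gs]
  | succ n ih =>
    have h := ms_gs_succ n
    have e9 : (1/9 : ℝ≥0∞) = ENNReal.ofReal (1/9) := by
      rw [ENNReal.ofReal_div_of_pos (by norm_num)]; simp
    rw [ih, e9, ← ENNReal.ofReal_mul (by norm_num)] at h
    have h2 : ENNReal.ofReal ((8/9) ^ (n+1)) + ENNReal.ofReal (1/9 * (8/9)^n)
        = ENNReal.ofReal ((8/9)^n) := by
      rw [← ENNReal.ofReal_add (by positivity) (by positivity)]
      congr 1; ring
    exact (ENNReal.add_left_inj ENNReal.ofReal_ne_top).1 (h.trans h2.symm)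

lemma tsum_ms : ∑' n, ms (gs n) = 9 := by
  simp_rw [ms_gs]
  rw [← ENNReal.ofReal_tsum_of_nonneg (fun n => by positivity)
    (summable_geometric_of_lt_one (by norm_num) (by norm_num)),
    tsum_geometric_of_lt_one (by norm_num) (by norm_num)]
  norm_num

/-- the invariant density -/
noncomputable def FF (y : ℝ) : ℝ≥0∞ := (1/9 : ℝ≥0∞) * ∑' n, gs n y

lemma FF_meas : Measurable FF :=
  (Measurable.tsum fun n => gs_meas n).const_mul _

lemma FF_anti : AntitoneOn FF (Icc (0:ℝ) 1) := by
  intro x hx y hy hxy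
  unfold FF
  gcongr with n
  exact gs_anti n hx hy hxy

lemma nine_mul : (1/9 : ℝ≥0∞) * 9 = 1 := by
  rw [one_div, ENNReal.inv_mul_cancel (by norm_num) (by norm_num)]

lemma ms_FF : ms FF = 1 := by
  unfold ms FF
  rw [lintegral_const_mul _ (Measurable.tsum fun n => gs_meas n),
    lintegral_tsum (fun n => (gs_meas n).aemeasurable)]
  change (1/9 : ℝ≥0∞) * ∑' n, ms (gs n) = 1
  rw [tsum_ms, nine_mul]

lemma PF_FF {y : ℝ} (hy : y ∈ Icc (0:ℝ) 1) : PF FF y = FF y := by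
  have h1 : PF FF y = (1/9 : ℝ≥0∞) * ∑' n, PF (gs n) y := by
    unfold PF FF
    rw [ENNReal.tsum_comm, ← ENNReal.tsum_mul_left]
    congr 1; funext i
    rw [ENNReal.tsum_mul_left]; ring
  rw [h1]
  unfold FF
  congr 1
  rw [tsum_eq_zero_add' (f := fun n => gs n y) ENNReal.summable]
  simp_rw [← gs_eq _ hy]
  rw [ENNReal.tsum_add, ENNReal.tsum_mul_left, tsum_ms, nine_mul, add_comm]
  rfl

lemma half_le {g : ℝ → ℝ≥0∞} (hg : AntitoneOn g (Icc (0:ℝ) 1)) : g (1/2) ≤ 2 * ms g := by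
  have h : (1/2 : ℝ≥0∞) * g (1/2) ≤ ms g := by
    unfold ms
    calc (1/2 : ℝ≥0∞) * g (1/2) = ∫⁻ x in Ico (0:ℝ) (1/2), g (1/2) := by
          simp [mul_comm]
      _ ≤ ∫⁻ x in Ico (0:ℝ) (1/2), g x := by
          apply setLIntegral_mono' measurableSet_Ico
          intro x hx
          have h1 := hx.1
          have h2 := hx.2
          exact hg ⟨h1, by linarith⟩ (by norm_num) h2.le
      _ ≤ _ := lintegral_mono_set (Ico_subset_Ico_right (by norm_num))
  calc g (1/2) = 2 * ((1/2 : ℝ≥0∞) * g (1/2)) := by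
        rw [← mul_assoc, one_div (2 : ℝ≥0∞), ENNReal.mul_inv_cancel (by norm_num) (by norm_num),
          one_mul]
    _ ≤ _ := by gcongr

lemma tsum_wt : ∑' i : ℕ, wt (i+1) 0 ≤ ENNReal.ofReal (3/4) := by
  have hz := hasSum_zeta_two
  have h2 := (hasSum_nat_add_iff' 2).2 hz
  have e : ∀ i : ℕ, wt (i+1) 0 = ENNReal.ofReal (1 / ((i + 2 : ℕ):ℝ)^2) := by
    intro i; unfold wt; congr 2; push_cast; ring
  simp_rw [e]
  rw [← ENNReal.ofReal_tsum_of_nonneg (fun n => by positivity) h2.summable, h2.tsum_eq]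
  apply ENNReal.ofReal_le_ofReal
  simp [Finset.sum_range_succ]
  have := Real.pi_lt_d2
  have := Real.pi_pos
  nlinarith

lemma gs_zero_succ (n : ℕ) :
    gs (n+1) 0 ≤ 2 * ms (gs n) + ENNReal.ofReal (3/4) * gs n 0 := by
  have h0 : gs (n+1) 0 ≤ PF (gs n) 0 := tsub_le_self
  refine h0.trans ?_
  unfold PF
  rw [tsum_eq_zero_add' ENNReal.summable]
  apply add_le_add
  · have e : wt 0 0 = 1 := by simp [wt]
    rw [e, phi_zero, one_mul]
    simpa using half_le (gs_anti n)
  · calc ∑' i : ℕ, wt (i+1) 0 * gs n (phi (i+1) 0) ≤ ∑' i : ℕ, wt (i+1) 0 * gs n 0 := by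
          gcongr with i
          exact gs_anti n (by simp) (phi_mem _ (by simp)) (phi_mem (i+1) (by simp)).1
      _ = (∑' i : ℕ, wt (i+1) 0) * gs n 0 := ENNReal.tsum_mul_right
      _ ≤ _ := by gcongr; exact tsum_wt

lemma partial_le (N : ℕ) : ∑ n ∈ Finset.range N, gs n 0 ≤ ENNReal.ofReal 76 := by
  induction N with
  | zero => simp
  | succ N ih =>
    rw [Finset.sum_range_succ']
    calc ∑ n ∈ Finset.range N, gs (n+1) 0 + gs 0 0
        ≤ ∑ n ∈ Finset.range N, (2 * ms (gs n) + ENNReal.ofReal (3/4) * gs n 0) + 1 := by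
          gcongr with n
          · exact gs_zero_succ n
          · exact le_rfl
      _ = 2 * ∑ n ∈ Finset.range N, ms (gs n)
          + ENNReal.ofReal (3/4) * ∑ n ∈ Finset.range N, gs n 0 + 1 := by
          rw [Finset.sum_add_distrib, Finset.mul_sum, Finset.mul_sum]
      _ ≤ 2 * 9 + ENNReal.ofReal (3/4) * ENNReal.ofReal 76 + 1 := by
          gcongr
          rw [← tsum_ms]
          exact ENNReal.sum_le_tsum _
      _ = ENNReal.ofReal 18 + ENNReal.ofReal (3/4 * 76) + ENNReal.ofReal 1 := by
          rw [ENNReal.ofReal_mul (by norm_num)]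
          norm_num
      _ = ENNReal.ofReal 76 := by
          rw [← ENNReal.ofReal_add (by norm_num) (by norm_num),
            ← ENNReal.ofReal_add (by norm_num) (by norm_num)]
          norm_num

lemma FF_zero : FF 0 < ⊤ := by
  unfold FF
  apply ENNReal.mul_lt_top (by simp)
  refine lt_of_le_of_lt ?_ (ENNReal.ofReal_lt_top (r := 76))
  rw [ENNReal.tsum_eq_iSup_nat]
  exact iSup_le partial_le

lemma FF_fin {x : ℝ} (hx : x ∈ Icc (0:ℝ) 1) : FF x < ⊤ :=
  (FF_anti (by simp) hx hx.1).trans_lt FF_zero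

lemma lam_eq : lam = volume.restrict (Ico (0:ℝ) 1) :=
  Measure.restrict_congr_set Ico_ae_eq_Icc.symm

/-- The piecewise convex map `τ x = 1/((2i+1)/(i(i+1)) − x) − i` on `[1/(i+1), 1/i)`,
`i = 1, 2, …`, with `τ 0 = 0` and `τ 1 = 1`, admits an absolutely continuous invariant
probability measure `μ = f*·λ` whose density `f*` is non-negative, of integral `1`, and
`λ`-a.e. equal to a non-increasing function. -/
theorem stmt19 (τ : ℝ → ℝ)
    (hτ0 : τ 0 = 0) (hτ1 : τ 1 = 1)
    (hτ : ∀ i : ℕ, 1 ≤ i → ∀ x ∈ Set.Ico (1 / ((i:ℝ) + 1)) (1 / (i:ℝ)),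
      τ x = 1 / ((2 * (i:ℝ) + 1) / ((i:ℝ) * ((i:ℝ) + 1)) - x) - (i:ℝ)) :
    ∃ f : ℝ → ℝ, MeasureTheory.Integrable f lam ∧
      (∀ x, 0 ≤ f x) ∧
      (∫ x, f x ∂lam) = 1 ∧
      (∃ f₀ : ℝ → ℝ, AntitoneOn f₀ (Set.Icc 0 1) ∧ f =ᵐ[lam] f₀) ∧
      (∀ A : Set ℝ, MeasurableSet A → A ⊆ Set.Icc (0:ℝ) 1 →
        lam.withDensity (fun x => ENNReal.ofReal (f x)) (τ ⁻¹' A) =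
        lam.withDensity (fun x => ENNReal.ofReal (f x)) A) := by
  have key : ∀ i : ℕ, ∀ y ∈ Ico (0:ℝ) 1, τ (phi i y) = y := by
    intro i y hy
    have hm := phi_mem_Ico i hy
    have h := hτ (i+1) (by omega) (phi i y) (by
      push_cast
      have e : (i:ℝ) + 1 + 1 = i + 2 := by ring
      rw [e]; exact hm)
    rw [h]
    push_cast
    have hy0 := hy.1
    have e : (2 * ((i:ℝ) + 1) + 1) / (((i:ℝ) + 1) * ((i:ℝ) + 1 + 1)) - phi i y
        = 1 / (y + (i:ℝ) + 1) := by
      unfold phi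
      have h1 : (i:ℝ) + 1 ≠ 0 := by positivity
      have h2 : (i:ℝ) + 2 ≠ 0 := by positivity
      have h4 : (i:ℝ) + 1 + 1 = i + 2 := by ring
      rw [h4]
      have h5 : (2 * ((i:ℝ) + 1) + 1) / (((i:ℝ) + 1) * ((i:ℝ) + 2))
        = 1 / ((i:ℝ) + 1) + 1 / ((i:ℝ) + 2) := by field_simp; ring
      rw [h5]; ring
    rw [e, one_div_one_div]; ring
  have hlint : ∫⁻ x, FF x ∂lam = 1 := by rw [lam_eq]; exact ms_FF
  have hfin : ∀ᵐ x ∂lam, x ∈ Icc (0:ℝ) 1 := ae_restrict_mem measurableSet_Icc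
  have hwd : lam.withDensity (fun x => ENNReal.ofReal ((FF x).toReal)) = lam.withDensity FF := by
    apply withDensity_congr_ae
    filter_upwards [hfin] with x hx
    exact ENNReal.ofReal_toReal (FF_fin hx).ne
  refine ⟨fun x => (FF x).toReal, ?_, fun x => ENNReal.toReal_nonneg, ?_, ?_, ?_⟩
  · apply integrable_toReal_of_lintegral_ne_top FF_meas.aemeasurable
    rw [hlint]; simp
  · rw [integral_toReal FF_meas.aemeasurable, hlint]
    · simp
    · filter_upwards [hfin] with x hx
      exact FF_fin hx
  · refine ⟨fun x => (FF x).toReal, ?_, Filter.EventuallyEq.rfl⟩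
    intro x hx y hy hxy
    exact ENNReal.toReal_mono (FF_fin hx).ne (FF_anti hx hy hxy)
  · intro A hA hA1
    rw [hwd]
    set B := A ∩ Ico (0:ℝ) 1 with hB
    have hBm : MeasurableSet B := hA.inter measurableSet_Ico
    have hB1 : B ⊆ Ico (0:ℝ) 1 := inter_subset_right
    have hac : lam.withDensity FF ≪ lam := withDensity_absolutelyContinuous _ _
    have hIoo : ∀ᵐ x ∂lam, x ∈ Ioo (0:ℝ) 1 := by
      have : lam = volume.restrict (Ioo (0:ℝ) 1) :=
        Measure.restrict_congr_set Ioo_ae_eq_Icc.symm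
      rw [this]
      exact ae_restrict_mem measurableSet_Ioo
    have e1 : (τ ⁻¹' A : Set ℝ) =ᵐ[lam] UU B := by
      filter_upwards [hIoo] with x hx
      apply propext
      change τ x ∈ A ↔ x ∈ UU B
      obtain ⟨i, y, hy, rfl⟩ := exists_phi hx
      rw [key i y hy]
      constructor
      · intro h
        exact mem_iUnion.2 ⟨i, y, ⟨h, hy⟩, rfl⟩
      · intro h
        obtain ⟨j, z, hz, hzy⟩ := mem_iUnion.1 h
        rw [← (phi_inj hz.2 hy hzy).2]
        exact hz.1
    have e2 : A =ᵐ[lam] B := by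
      filter_upwards [hIoo] with x hx
      apply propext
      exact ⟨fun h => ⟨h, hx.1.le, hx.2⟩, fun h => h.1⟩
    rw [measure_congr (hac.ae_eq e1), measure_congr (hac.ae_eq e2)]
    have hUm : MeasurableSet (UU B) :=
      MeasurableSet.iUnion fun i => phi_image_meas i hBm hB1
    have hUs : UU B ⊆ Icc (0:ℝ) 1 := by
      refine iUnion_subset fun i => ?_
      rintro _ ⟨y, hy, rfl⟩
      exact phi_mem i ⟨hy.2.1, hy.2.2.le⟩
    rw [withDensity_apply _ hUm, withDensity_apply _ hBm]
    unfold lam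
    rw [Measure.restrict_restrict_of_subset hUs,
      Measure.restrict_restrict_of_subset (hB1.trans Ico_subset_Icc_self),
      lint_UU FF_meas hBm hB1]
    apply setLIntegral_congr_fun hBm
    intro y hy
    exact PF_FF ⟨hy.2.1, hy.2.2.le⟩
end
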